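/- arXiv:1911.06170 — 4 statements merged into one kernel-verified Lean document; each statement's English description precedes it below -/
import Mathlib

section
/- For all integers a ≥ 2 and ℓ ≥ 1 and every real t with 0 < t < 1/2, the Hausdorff dimension of 𝓛(a) ∩ [0, t) is at most log(2⌈a^ℓ·t⌉)/log(a^ℓ). In particular, 𝓛(a) has Lebesgue measure zero. -/
/-- Distance from `x` to the nearest integer. -/
noncomputable def distNearestInt (x : ℝ) : ℝ := |x - round x|

/-- `limsup_{n→∞} ‖ξ·α^n‖`. -/
noncomputable def limsupDist (α ξ : ℝ) : ℝ :=
  Filter.limsup (fun n : ℕ => distNearestInt (ξ * α ^ n)) Filter.atTop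

/-- The multiplicative Markoff–Lagrange spectrum `𝓛(α)`. -/
noncomputable def specL (α : ℝ) : Set ℝ := {l : ℝ | ∃ ξ : ℝ, limsupDist α ξ = l}

/-!
Let `a` be an integer. Since `‖x·m‖` depends on `x` only through `‖x‖` when `m` is an integer,
multiplication by `a ^ m` acts on the cluster points of the sequence `n ↦ ‖ξ·aⁿ‖`. The largest
cluster point is the limsup `L`, so every `L ∈ 𝓛(a)` satisfies `‖L·a ^ m‖ ≤ L` for all `m`.

If moreover `L < t`, then with `b = a ^ ℓ` each `L·b ^ k` is within `t` of an integer, which forces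
every base-`b` digit of `L` to be one of the `⌈b·t⌉` smallest or the `⌈b·t⌉` largest digits.
Covering by cylinders of digit sequences bounds the dimension. For `t < 1 / 2` and `ℓ` large this
bound is less than `1`, and letting `t` tend to `1 / 2` shows that `𝓛(a)` is a null set.
-/

open Filter MeasureTheory Set Topology

section DistNearestInt

lemma distNearestInt_eq_norm (x : ℝ) : distNearestInt x = ‖(x : UnitAddCircle)‖ :=
  UnitAddCircle.norm_eq.symm

lemma distNearestInt_nonneg (x : ℝ) : 0 ≤ distNearestInt x := abs_nonneg _

lemma distNearestInt_le_half (x : ℝ) : distNearestInt x ≤ 1 / 2 := abs_sub_round x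

lemma continuous_distNearestInt : Continuous distNearestInt := by
  simp only [funext distNearestInt_eq_norm]
  fun_prop

lemma coe_distNearestInt_eq_or_eq_neg (x : ℝ) :
    (distNearestInt x : UnitAddCircle) = x ∨ (distNearestInt x : UnitAddCircle) = -x := by
  have hround : ((round x : ℝ) : UnitAddCircle) = 0 :=
    AddCircle.coe_eq_zero_iff 1 |>.mpr ⟨round x, by simp⟩
  rcases abs_choice (x - round x) with h | h
  · left; simp [distNearestInt, h, hround]
  · right; simp [distNearestInt, h, hround]

lemma distNearestInt_distNearestInt_mul_intCast (x : ℝ) (m : ℤ) :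
    distNearestInt (distNearestInt x * m) = distNearestInt (x * m) := by
  have norm_mul (y : ℝ) : distNearestInt (y * m) = ‖m • (y : UnitAddCircle)‖ := by
    rw [distNearestInt_eq_norm, mul_comm, ← zsmul_eq_mul, AddCircle.coe_zsmul]
  rw [norm_mul, norm_mul]
  rcases coe_distNearestInt_eq_or_eq_neg x with h | h
  · rw [h]
  · rw [h, smul_neg, norm_neg]

lemma isBoundedUnder_le_distNearestInt {ι : Type*} (l : Filter ι) (u : ι → ℝ) :
    l.IsBoundedUnder (· ≤ ·) fun i => distNearestInt (u i) :=
  isBoundedUnder_of ⟨1 / 2, fun i => distNearestInt_le_half (u i)⟩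

lemma isBoundedUnder_ge_distNearestInt {ι : Type*} (l : Filter ι) (u : ι → ℝ) :
    l.IsBoundedUnder (· ≥ ·) fun i => distNearestInt (u i) :=
  isBoundedUnder_of ⟨0, fun i => distNearestInt_nonneg (u i)⟩

end DistNearestInt

section Spectrum

lemma mapClusterPt_limsupDist (α ξ : ℝ) :
    MapClusterPt (limsupDist α ξ) atTop fun n : ℕ => distNearestInt (ξ * α ^ n) :=
  MapClusterPt.limsup (isBoundedUnder_ge_distNearestInt _ _).isCoboundedUnder_le
    (isBoundedUnder_le_distNearestInt _ _)

lemma specL_subset_Icc (α : ℝ) : specL α ⊆ Icc 0 (1 / 2) := by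
  rintro _ ⟨ξ, rfl⟩
  exact isClosed_Icc.mem_of_mapClusterPt (mapClusterPt_limsupDist α ξ) <|
    .of_forall fun n => ⟨distNearestInt_nonneg _, distNearestInt_le_half _⟩

lemma distNearestInt_mul_intCast_pow_le_of_mem_specL {a : ℤ} {L : ℝ} (hL : L ∈ specL a) (m : ℕ) :
    distNearestInt (L * (a : ℝ) ^ m) ≤ L := by
  obtain ⟨ξ, rfl⟩ := hL
  have hcont : Continuous fun x : ℝ => distNearestInt (x * (a : ℝ) ^ m) :=
    continuous_distNearestInt.comp (continuous_mul_const _)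
  have hshift (n : ℕ) : distNearestInt (distNearestInt (ξ * (a : ℝ) ^ n) * (a : ℝ) ^ m) =
      distNearestInt (ξ * (a : ℝ) ^ (n + m)) := by
    rw [← Int.cast_pow a m, distNearestInt_distNearestInt_mul_intCast, Int.cast_pow, mul_assoc,
      ← pow_add]
  have hcluster : MapClusterPt (distNearestInt (limsupDist a ξ * (a : ℝ) ^ m)) atTop
      fun n : ℕ => distNearestInt (ξ * (a : ℝ) ^ (n + m)) := by
    simpa only [Function.comp_def, hshift] using
      (mapClusterPt_limsupDist a ξ).continuousAt_comp hcont.continuousAt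
  exact (MapClusterPt.of_comp (tendsto_add_atTop_nat m) hcluster).le_limsup
    (isBoundedUnder_le_distNearestInt _ _)

end Spectrum

section HausdorffDimension

variable {X : Type*} [EMetricSpace X] {s : Set X} {ι : ℕ → Type*} [∀ n, Fintype (ι n)]
  {t : ∀ n, ι n → Set X} {b M : ℝ}

lemma sum_ediam_rpow_logb_le_one {κ : Type*} [Fintype κ] {u : κ → Set X} (hb : 1 < b) (hM : 1 ≤ M)
    {n : ℕ} (hcard : (Fintype.card κ : ℝ) ≤ M ^ n)
    (hdiam : ∀ i, Metric.ediam (u i) ≤ ENNReal.ofReal (b ^ n)⁻¹) :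
    ∑ i, Metric.ediam (u i) ^ Real.logb b M ≤ 1 := by
  have hb0 : 0 < b := one_pos.trans hb
  have hM0 : 0 < M := one_pos.trans_le hM
  have hlogb : 0 ≤ Real.logb b M := Real.logb_nonneg hb hM
  have hpow : ((b ^ n)⁻¹) ^ Real.logb b M = (M ^ n)⁻¹ := by
    rw [Real.inv_rpow (by positivity), ← Real.rpow_pow_comm hb0.le, Real.rpow_logb hb0 hb.ne' hM0]
  calc ∑ i, Metric.ediam (u i) ^ Real.logb b M
      ≤ ∑ _i : κ, ENNReal.ofReal (b ^ n)⁻¹ ^ Real.logb b M := by gcongr; exact hdiam _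
    _ = ENNReal.ofReal (Fintype.card κ * (M ^ n)⁻¹) := by
        rw [Finset.sum_const, Finset.card_univ, nsmul_eq_mul,
          ENNReal.ofReal_rpow_of_nonneg (by positivity) hlogb, hpow,
          ENNReal.ofReal_mul (by positivity), ENNReal.ofReal_natCast]
    _ ≤ 1 := by
        rw [ENNReal.ofReal_le_one]
        exact mul_inv_le_one_of_le₀ hcard (by positivity)

lemma dimH_le_logb_of_covers (hb : 1 < b) (hM : 1 ≤ M)
    (hcard : ∀ n, (Fintype.card (ι n) : ℝ) ≤ M ^ n)
    (hdiam : ∀ n i, Metric.ediam (t n i) ≤ ENNReal.ofReal (b ^ n)⁻¹)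
    (hcover : ∀ n, s ⊆ ⋃ i, t n i) :
    dimH s ≤ ENNReal.ofReal (Real.logb b M) := by
  borelize X
  have hradius : Tendsto (fun n : ℕ => ENNReal.ofReal (b ^ n)⁻¹) atTop (𝓝 0) := by
    simpa using ENNReal.tendsto_ofReal
      (tendsto_inv_atTop_zero.comp (tendsto_pow_atTop_atTop_of_one_lt hb))
  have hmeasure : μH[Real.logb b M] s ≤ 1 :=
    calc μH[Real.logb b M] s
        ≤ liminf (fun n => ∑ i, Metric.ediam (t n i) ^ Real.logb b M) atTop :=
          Measure.hausdorffMeasure_le_liminf_sum _ s _ hradius t (.of_forall hdiam)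
            (.of_forall hcover)
      _ ≤ 1 := liminf_le_of_frequently_le' <| .of_forall fun n =>
          sum_ediam_rpow_logb_le_one hb hM (hcard n) (hdiam n)
  apply dimH_le_of_hausdorffMeasure_ne_top (d := (Real.logb b M).toNNReal)
  rw [Real.coe_toNNReal _ (Real.logb_nonneg hb hM)]
  exact ne_top_of_le_ne_top ENNReal.one_ne_top hmeasure

lemma volume_eq_zero_of_dimH_lt_one {s : Set ℝ} (hs : dimH s < 1) : volume s = 0 := by
  rw [← hausdorffMeasure_real]
  exact_mod_cast hausdorffMeasure_of_dimH_lt (d := 1) (by exact_mod_cast hs)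

end HausdorffDimension

section Digits

variable {b : ℕ}

/-- The set of reals in `[0, 1]` admitting a base-`b` expansion all of whose digits lie in `D`
(a generalised Cantor set). A number with two expansions belongs to it as soon as one of them
uses only digits of `D`. -/
def restrictedDigitSet (D : Finset (Fin b)) : Set ℝ :=
  Real.ofDigits '' {w | ∀ i, w i ∈ D}

lemma dimH_restrictedDigitSet_le (hb : 1 < b) {D : Finset (Fin b)} (hD : D.Nonempty) :
    dimH (restrictedDigitSet D) ≤ ENNReal.ofReal (Real.logb b D.card) := by
  refine dimH_le_logb_of_covers (ι := fun n => Fin n → D)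
    (t := fun n v => Real.ofDigits '' {w : ℕ → Fin b | ∀ i : Fin n, w i = v i})
    (by exact_mod_cast hb) (by exact_mod_cast hD.card_pos) (fun n => by simp) ?_ ?_
  · rintro n v
    apply Metric.ediam_le
    rintro _ ⟨w, hw, rfl⟩ _ ⟨w', hw', rfl⟩
    rw [edist_dist, Real.dist_eq]
    exact ENNReal.ofReal_le_ofReal <| Real.abs_ofDigits_sub_ofDigits_le fun i hi =>
      (hw ⟨i, hi⟩).trans (hw' ⟨i, hi⟩).symm
  · rintro n _ ⟨w, hw, rfl⟩
    exact mem_iUnion.2 ⟨fun i => ⟨w i, hw i⟩, w, fun _ => rfl, rfl⟩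

/-- The `c` smallest and the `c` largest digits in base `b`. -/
def extremeDigits (b c : ℕ) : Finset (Fin b) :=
  {d : Fin b | (d : ℕ) < c ∨ (d.rev : ℕ) < c}

lemma card_extremeDigits_le (b c : ℕ) : (extremeDigits b c).card ≤ 2 * c := by
  have hsmall : Finset.card {d : Fin b | (d : ℕ) < c} ≤ c :=
    Fin.card_filter_val_lt.trans_le (min_le_right b c)
  have hlarge : Finset.card {d : Fin b | (d.rev : ℕ) < c} ≤ c := by
    refine (Finset.card_le_card_of_injOn Fin.rev (fun d hd => ?_) Fin.rev_injective.injOn).trans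
      hsmall
    simpa using hd
  rw [extremeDigits, Finset.filter_or, two_mul]
  exact (Finset.card_union_le _ _).trans (add_le_add hsmall hlarge)

variable [NeZero b]

lemma extremeDigits_nonempty {c : ℕ} (hc : 0 < c) : (extremeDigits b c).Nonempty :=
  ⟨0, by simp [extremeDigits, hc]⟩

lemma digits_val_eq_floor_mul_fract {x : ℝ} (hx : 0 ≤ x) (k : ℕ) :
    (Real.digits x b k : ℕ) = ⌊b * Int.fract (x * b ^ k)⌋₊ := by
  have hb : (0 : ℝ) < b := by exact_mod_cast NeZero.pos b
  set y := x * (b : ℝ) ^ k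
  have hy : 0 ≤ y := by positivity
  have hsplit : x * (b : ℝ) ^ (k + 1) = b * Int.fract y + (b * ⌊y⌋₊ : ℕ) := by
    rw [pow_succ, ← mul_assoc, Nat.cast_mul, natCast_floor_eq_intCast_floor hy, ← mul_add,
      Int.fract_add_floor, mul_comm]
  have hlt : ⌊b * Int.fract y⌋₊ < b :=
    (Nat.floor_lt (by positivity)).2 (mul_lt_of_lt_one_right hb (Int.fract_lt_one y))
  rw [Real.digits, Fin.val_ofNat, hsplit, Nat.floor_add_natCast (by positivity),
    Nat.add_mul_mod_self_left, Nat.mod_eq_of_lt hlt]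

lemma digits_mem_extremeDigits {x t : ℝ} (hx : 0 ≤ x) {k : ℕ}
    (h : distNearestInt (x * b ^ k) < t) :
    Real.digits x b k ∈ extremeDigits b ⌈b * t⌉₊ := by
  have hb : (0 : ℝ) < b := by exact_mod_cast NeZero.pos b
  have hdigit := digits_val_eq_floor_mul_fract (b := b) hx k
  rw [distNearestInt, abs_sub_round_eq_min, min_lt_iff] at h
  set f := Int.fract (x * (b : ℝ) ^ k)
  simp only [extremeDigits, Finset.mem_filter_univ, Fin.val_rev, hdigit]
  have hceil := Nat.le_ceil (b * t)
  rcases h with hsmall | hlarge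
  · left
    have hf : b * f < ⌈b * t⌉₊ := (mul_lt_mul_of_pos_left hsmall hb).trans_le hceil
    exact (Nat.floor_lt (by positivity)).2 hf
  · right
    have hf : (b : ℝ) - b * f < ⌈b * t⌉₊ := by
      linarith [mul_lt_mul_of_pos_left hlarge hb]
    have : (b : ℝ) < ⌊b * f⌋₊ + 1 + ⌈b * t⌉₊ := by linarith [Nat.lt_floor_add_one (b * f)]
    have : b < ⌊b * f⌋₊ + 1 + ⌈b * t⌉₊ := by exact_mod_cast this
    lia

lemma mem_restrictedDigitSet_extremeDigits {x t : ℝ} (hb : 1 < b) (hx : x ∈ Ico 0 1)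
    (h : ∀ k : ℕ, distNearestInt (x * b ^ k) < t) :
    x ∈ restrictedDigitSet (extremeDigits b ⌈b * t⌉₊) :=
  ⟨Real.digits x b, fun k => digits_mem_extremeDigits hx.1 (h k), Real.ofDigits_digits hb hx⟩

end Digits

section SpectrumDimension

variable {a : ℕ} {t : ℝ}

lemma specL_inter_Ico_subset_restrictedDigitSet (ha : 2 ≤ a) {ℓ : ℕ} (hℓ : ℓ ≠ 0) :
    specL a ∩ Ico 0 t ⊆ restrictedDigitSet (extremeDigits (a ^ ℓ) ⌈((a ^ ℓ : ℕ) : ℝ) * t⌉₊) := by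
  rintro x ⟨hx, -, hxt⟩
  have hb : 1 < a ^ ℓ := Nat.one_lt_pow hℓ ha
  have : NeZero (a ^ ℓ) := ⟨by lia⟩
  obtain ⟨hx0, hx_half⟩ := specL_subset_Icc a hx
  refine mem_restrictedDigitSet_extremeDigits hb ⟨hx0, by linarith⟩ fun k => lt_of_le_of_lt ?_ hxt
  simpa [pow_mul] using distNearestInt_mul_intCast_pow_le_of_mem_specL (a := a) hx (ℓ * k)

lemma dimH_specL_inter_Ico_le (ha : 2 ≤ a) {ℓ : ℕ} (hℓ : ℓ ≠ 0) (ht : 0 < t) :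
    dimH (specL a ∩ Ico 0 t) ≤
      ENNReal.ofReal (Real.logb ((a : ℝ) ^ ℓ) (2 * ⌈(a : ℝ) ^ ℓ * t⌉)) := by
  have hb : 1 < a ^ ℓ := Nat.one_lt_pow hℓ ha
  have : NeZero (a ^ ℓ) := ⟨by lia⟩
  rw [← natCast_ceil_eq_intCast_ceil (by positivity), ← Nat.cast_pow]
  set c := ⌈((a ^ ℓ : ℕ) : ℝ) * t⌉₊
  have hD : (extremeDigits (a ^ ℓ) c).Nonempty :=
    extremeDigits_nonempty (Nat.ceil_pos.2 (by positivity))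
  calc dimH (specL a ∩ Ico 0 t)
      ≤ dimH (restrictedDigitSet (extremeDigits (a ^ ℓ) c)) :=
        dimH_mono (specL_inter_Ico_subset_restrictedDigitSet ha hℓ)
    _ ≤ ENNReal.ofReal (Real.logb (a ^ ℓ : ℕ) (extremeDigits (a ^ ℓ) c).card) :=
        dimH_restrictedDigitSet_le hb hD
    _ ≤ ENNReal.ofReal (Real.logb (a ^ ℓ : ℕ) (2 * c)) := by
        gcongr
        · exact_mod_cast hb
        · exact_mod_cast card_extremeDigits_le (a ^ ℓ) c

lemma exists_logb_two_mul_ceil_lt_one (ha : 2 ≤ a) (ht0 : 0 < t) (ht : t < 1 / 2) :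
    ∃ ℓ ≠ 0, Real.logb ((a : ℝ) ^ ℓ) (2 * ⌈(a : ℝ) ^ ℓ * t⌉) < 1 := by
  have ha1 : (1 : ℝ) < a := by exact_mod_cast ha
  obtain ⟨ℓ, hℓ, hlarge⟩ := ((eventually_ne_atTop 0).and
    ((tendsto_pow_atTop_atTop_of_one_lt ha1).eventually_gt_atTop (1 / (1 / 2 - t)))).exists
  refine ⟨ℓ, hℓ, ?_⟩
  set b := (a : ℝ) ^ ℓ
  have hb : 1 < b := one_lt_pow₀ ha1 hℓ
  have hceil_pos : (0 : ℝ) < ⌈b * t⌉ := by exact_mod_cast Int.ceil_pos.2 (by positivity)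
  have hceil_lt : (2 * ⌈b * t⌉ : ℝ) < b := by
    rw [div_lt_iff₀ (by linarith)] at hlarge
    linarith [Int.ceil_lt_add_one (b * t)]
  rwa [Real.logb_lt_iff_lt_rpow hb (by positivity), Real.rpow_one]

lemma volume_specL_inter_Ico (ha : 2 ≤ a) (ht0 : 0 < t) (ht : t < 1 / 2) :
    volume (specL a ∩ Ico 0 t) = 0 := by
  obtain ⟨ℓ, hℓ, hlt⟩ := exists_logb_two_mul_ceil_lt_one ha ht0 ht
  exact volume_eq_zero_of_dimH_lt_one <|
    (dimH_specL_inter_Ico_le ha hℓ ht0).trans_lt (ENNReal.ofReal_lt_one.2 hlt)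

lemma volume_specL (ha : 2 ≤ a) : volume (specL a) = 0 := by
  obtain ⟨t, -, ht, htendsto⟩ := exists_seq_strictMono_tendsto' (show (0 : ℝ) < 1 / 2 by norm_num)
  have hcover : specL a ⊆ {1 / 2} ∪ ⋃ n, specL a ∩ Ico 0 (t n) := by
    intro x hx
    obtain ⟨hx0, hx_half⟩ := specL_subset_Icc a hx
    rcases hx_half.eq_or_lt with hx_eq | hx_lt
    · exact .inl hx_eq
    · obtain ⟨n, hn⟩ := (htendsto.eventually_const_lt hx_lt).exists
      exact .inr (mem_iUnion.2 ⟨n, hx, hx0, hn⟩)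
  exact measure_mono_null hcover <| measure_union_null (measure_singleton _) <|
    measure_iUnion_null fun n => volume_specL_inter_Ico ha (ht n).1 (ht n).2

end SpectrumDimension

theorem stmt1 (a : ℕ) (ha : 2 ≤ a) (ℓ : ℕ) (hℓ : 1 ≤ ℓ) (t : ℝ) (ht0 : 0 < t)
    (ht : t < 1 / 2) :
    dimH (specL a ∩ Set.Ico 0 t) ≤
      ENNReal.ofReal
        (Real.log (2 * (⌈(a : ℝ) ^ ℓ * t⌉ : ℝ)) / Real.log ((a : ℝ) ^ ℓ)) ∧
    MeasureTheory.volume (specL a) = 0 :=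
  ⟨dimH_specL_inter_Ico_le ha (Nat.one_le_iff_ne_zero.1 hℓ) ht0, volume_specL ha⟩
end

section
/- Let α be a quadratic Pisot unit, i.e. α = (b+√(b²−4))/2 with an integer b ≥ 3 or α = (b+√(b²+4))/2 with an integer b ≥ 1. For every real t ∈ [0, 1/2], the Hausdorff dimension of 𝓛(α) ∩ [0, t] is at most log(4m+1)/log(α), where m = ⌊(2+b)·t⌋. In particular, 𝓛(α) ∩ [0, t₀] has Lebesgue measure zero, where t₀ = (α−1)/(4(b+2)). -/
/-!
Let `β` be the conjugate of `α` and `σ = αβ = ±1` its norm. The rounding errors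
`εₙ = ξαⁿ - round (ξαⁿ)` satisfy `εₙ₊₂ = b εₙ₊₁ - σ εₙ - sₙ` with *integers* `sₙ`, and if
`limsup |εₙ| ≤ t` then `|sₙ| < m + 1`, hence `|sₙ| ≤ m`, for all large `n`.
Solving the recurrence forwards along `α` and backwards along `β` gives
`(α - β) ε_{c+1} = s_c + ∑_{k ≥ 1} (s_{c+k} α⁻ᵏ + s_{c-k} βᵏ)` up to a small error, and since
`β = σ α⁻¹` the two halves fold into one series in `α⁻¹` whose integer digits lie in `[-2m, 2m]`.
Truncating after `α⁻ᴺ`, the spectrum below `t` is covered by `(4m + 1)^(N + 1)` intervals of length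
`O(α⁻ᴺ)`. The bound is below `1` at `t₀` because `4m + 1 ≤ α` and `α` is not an integer.
-/

section Covering

open Filter MeasureTheory Topology

variable {X : Type*} [MetricSpace X] {A : Set X} {F : ℕ → Finset X} {C D K r : ℝ}

theorem hausdorffMeasure_le_of_forall_subset_iUnion_closedBall [MeasurableSpace X] [BorelSpace X]
    {s : ℝ} (hs : 0 ≤ s) (hr₀ : 0 ≤ r) (hr₁ : r < 1) (hC : 0 ≤ C) (hK : 0 ≤ K)
    (hKr : K * r ^ s ≤ 1) (hcard : ∀ N, ((F N).card : ℝ) ≤ D * K ^ N)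
    (hcover : ∀ N, A ⊆ ⋃ x ∈ F N, Metric.closedBall x (C * r ^ N)) :
    μH[s] A ≤ ENNReal.ofReal (D * (2 * C) ^ s) := by
  have hD : 0 ≤ D := by simpa using (Nat.cast_nonneg _).trans (hcard 0)
  have hdiam (N : ℕ) (x : F N) :
      Metric.ediam (Metric.closedBall (x : X) (C * r ^ N)) ≤ ENNReal.ofReal (2 * C * r ^ N) := by
    refine Metric.ediam_le_of_forall_dist_le fun y hy z hz => ?_
    linarith [dist_triangle_right y z x, Metric.mem_closedBall.1 hy, Metric.mem_closedBall.1 hz]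
  have hdiam_tendsto : Tendsto (fun N : ℕ => ENNReal.ofReal (2 * C * r ^ N)) atTop (𝓝 0) := by
    simpa using ENNReal.tendsto_ofReal
      ((tendsto_pow_atTop_nhds_zero_of_lt_one hr₀ hr₁).const_mul (2 * C))
  have hsum (N : ℕ) : ∑ x : F N, Metric.ediam (Metric.closedBall (x : X) (C * r ^ N)) ^ s ≤
      ENNReal.ofReal (D * (2 * C) ^ s) := by
    calc _ ≤ ∑ _x : F N, ENNReal.ofReal ((2 * C * r ^ N) ^ s) := by
          refine Finset.sum_le_sum fun x _ => ?_
          rw [← ENNReal.ofReal_rpow_of_nonneg (by positivity) hs]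
          exact ENNReal.rpow_le_rpow (hdiam N x) hs
      _ = ENNReal.ofReal ((F N).card * (2 * C * r ^ N) ^ s) := by
          rw [Finset.sum_const, Finset.card_univ, Fintype.card_coe, nsmul_eq_mul,
            ENNReal.ofReal_mul (by positivity), ENNReal.ofReal_natCast]
      _ ≤ ENNReal.ofReal (D * K ^ N * (2 * C * r ^ N) ^ s) := by gcongr; exact hcard N
      _ = ENNReal.ofReal (D * (2 * C) ^ s * (K * r ^ s) ^ N) := by
          rw [Real.mul_rpow (by positivity) (by positivity), ← Real.rpow_pow_comm hr₀, mul_pow]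
          ring_nf
      _ ≤ _ := ENNReal.ofReal_le_ofReal
          (mul_le_of_le_one_right (by positivity) (pow_le_one₀ (by positivity) hKr))
  refine (Measure.hausdorffMeasure_le_liminf_sum s A _ hdiam_tendsto
    (fun N (x : F N) => Metric.closedBall (x : X) (C * r ^ N)) (.of_forall hdiam)
    (.of_forall fun N => (hcover N).trans_eq (Set.biUnion_eq_iUnion _ _))).trans ?_
  exact (liminf_le_liminf (.of_forall hsum)).trans (by simp)

theorem dimH_le_of_forall_subset_iUnion_closedBall {a : ℝ} (ha : 1 < a) (hC : 0 ≤ C) (hK : 1 ≤ K)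
    (hcard : ∀ N, ((F N).card : ℝ) ≤ D * K ^ N)
    (hcover : ∀ N, A ⊆ ⋃ x ∈ F N, Metric.closedBall x (C * a⁻¹ ^ N)) :
    dimH A ≤ ENNReal.ofReal (Real.log K / Real.log a) := by
  borelize X
  have ha₀ : 0 < a := by positivity
  have hK₀ : 0 < K := by positivity
  have hs : 0 ≤ Real.log K / Real.log a := div_nonneg (Real.log_nonneg hK) (Real.log_pos ha).le
  have hKa : K * a⁻¹ ^ (Real.log K / Real.log a) ≤ 1 := by
    have hpow : a ^ (Real.log K / Real.log a) = K := Real.rpow_logb ha₀ ha.ne' hK₀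
    rw [Real.inv_rpow ha₀.le, hpow, mul_inv_cancel₀ hK₀.ne']
  have hmeasure : μH[Real.log K / Real.log a] A ≤ _ :=
    hausdorffMeasure_le_of_forall_subset_iUnion_closedBall hs (by positivity)
      (inv_lt_one_of_one_lt₀ ha) hC hK₀.le hKa hcard hcover
  refine dimH_le_of_hausdorffMeasure_ne_top ?_
  rw [Real.coe_toNNReal _ hs]
  exact ne_top_of_le_ne_top ENNReal.ofReal_ne_top hmeasure

end Covering

theorem frequently_abs_limsup_sub_lt {ι : Type*} {f : Filter ι} {u : ι → ℝ}
    (hbdd : f.IsBoundedUnder (· ≤ ·) u) (hcobdd : f.IsCoboundedUnder (· ≤ ·) u)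
    {δ : ℝ} (hδ : 0 < δ) : ∃ᶠ n in f, |Filter.limsup u f - u n| < δ := by
  have hupper := Filter.eventually_lt_of_limsup_lt (lt_add_of_pos_right (Filter.limsup u f) hδ) hbdd
  have hlower := Filter.frequently_lt_of_lt_limsup hcobdd (sub_lt_self (Filter.limsup u f) hδ)
  refine (hlower.and_eventually hupper).mono fun n hn => abs_sub_lt_iff.2 ⟨?_, ?_⟩
  · linarith [hn.1]
  · linarith [hn.2]

/-- The rounding error `ξ αⁿ - round (ξ αⁿ)`, whose absolute value is `‖ξ αⁿ‖`. -/
noncomputable def roundingError (α ξ : ℝ) (n : ℕ) : ℝ := ξ * α ^ n - round (ξ * α ^ n)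

theorem limsupDist_eq_limsup_abs_roundingError (α ξ : ℝ) :
    limsupDist α ξ = Filter.limsup (fun n => |roundingError α ξ n|) Filter.atTop :=
  rfl

theorem abs_roundingError_le (α ξ : ℝ) (n : ℕ) : |roundingError α ξ n| ≤ 1 / 2 :=
  abs_sub_round _

/-- The coefficient of `α⁻ᵏ` in the two-sided expansion `s_c + ∑_{k ≥ 1} (s_{c+k} α⁻ᵏ + s_{c-k} βᵏ)`
once `β = σ α⁻¹` is substituted. It is meaningful only for `k ≤ c`, as `c - k` is truncated. -/
def foldedDigit (s : ℕ → ℤ) (σ : ℤ) (c : ℕ) : ℕ → ℤ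
  | 0 => s c
  | k + 1 => s (c + (k + 1)) + σ ^ (k + 1) * s (c - (k + 1))

theorem abs_foldedDigit_le {s : ℕ → ℤ} {σ : ℤ} (hσ : IsUnit σ) {m : ℤ} {n₀ c k : ℕ}
    (hs : ∀ n ≥ n₀, |s n| ≤ m) (hc : n₀ + k ≤ c) : |foldedDigit s σ c k| ≤ 2 * m := by
  cases k with
  | zero => exact (hs c hc).trans (by linarith [(abs_nonneg _).trans (hs c hc)])
  | succ k =>
    have hσk : |σ ^ (k + 1)| = 1 := Int.isUnit_iff_abs_eq.1 (hσ.pow _)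
    calc _ ≤ |s (c + (k + 1))| + |σ ^ (k + 1) * s (c - (k + 1))| := abs_add_le _ _
      _ = |s (c + (k + 1))| + |s (c - (k + 1))| := by rw [abs_mul, hσk, one_mul]
      _ ≤ m + m := add_le_add (hs _ (by lia)) (hs _ (by lia))
      _ = 2 * m := (two_mul m).symm

/-- The points `|∑_{k ≤ N} dₖ α⁻ᵏ| / (α - β)` with integer digits `|dₖ| ≤ 2m`: the centres of the
intervals covering the spectrum at scale `α⁻ᴺ`. -/
noncomputable def digitPoints (α β : ℝ) (m : ℤ) (N : ℕ) : Finset ℝ :=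
  (Fintype.piFinset fun _ : Fin (N + 1) => Finset.Icc (-(2 * m)) (2 * m)).image
    fun d => |(∑ k : Fin (N + 1), d k * α⁻¹ ^ (k : ℕ)) / (α - β)|

theorem card_digitPoints_le (α β : ℝ) {m : ℤ} (hm : 0 ≤ m) (N : ℕ) :
    ((digitPoints α β m N).card : ℝ) ≤ (4 * m + 1) * (4 * m + 1) ^ N := by
  have hcard : ((Finset.Icc (-(2 * m)) (2 * m)).card : ℝ) = 4 * m + 1 := by
    have hint : ((Finset.Icc (-(2 * m)) (2 * m)).card : ℤ) = 4 * m + 1 := by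
      rw [Int.card_Icc]
      lia
    exact_mod_cast hint
  calc ((digitPoints α β m N).card : ℝ)
      ≤ ((Finset.Icc (-(2 * m)) (2 * m)).card ^ (N + 1) : ℕ) := by
        rw [← Fintype.card_piFinset_const]
        exact_mod_cast Finset.card_image_le
    _ = (4 * m + 1) * (4 * m + 1) ^ N := by rw [Nat.cast_pow, hcard, pow_succ']

theorem abs_sum_div_mem_digitPoints (α β : ℝ) {m : ℤ} {N : ℕ} {d : ℕ → ℤ}
    (hd : ∀ k ≤ N, |d k| ≤ 2 * m) :
    |(∑ k ∈ Finset.range (N + 1), d k * α⁻¹ ^ k) / (α - β)| ∈ digitPoints α β m N := by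
  refine Finset.mem_image.2 ⟨fun k => d k, ?_, ?_⟩
  · exact Fintype.mem_piFinset.2 fun k => Finset.mem_Icc.2 (abs_le.1 (hd k (by lia)))
  · rw [Fin.sum_univ_eq_sum_range fun k => (d k : ℝ) * α⁻¹ ^ k]

/-- `α` is a quadratic Pisot unit with conjugate `β`, trace `b` and norm `σ`. Irrationality of `α`
and `|β| < 1` follow from the four fields. -/
structure IsQuadraticPisotUnit (α β : ℝ) (b σ : ℤ) : Prop where
  one_lt : 1 < α
  add_conj : α + β = b
  mul_conj : α * β = σ
  isUnit_norm : IsUnit σ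

namespace IsQuadraticPisotUnit

open Filter

theorem of_sqrt {α : ℝ} {b σ : ℤ} (hα : α = (b + √((b : ℝ) ^ 2 - 4 * σ)) / 2) (hone : 1 < α)
    (hdisc : 0 ≤ (b : ℝ) ^ 2 - 4 * σ) (hσ : IsUnit σ) :
    IsQuadraticPisotUnit α ((b - √((b : ℝ) ^ 2 - 4 * σ)) / 2) b σ where
  one_lt := hone
  add_conj := by rw [hα]; ring
  mul_conj := by
    rw [hα]
    linear_combination -(1 / 4) * Real.sq_sqrt hdisc
  isUnit_norm := hσ

theorem exists_of_eq {b : ℤ} {α : ℝ}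
    (h : (3 ≤ b ∧ α = (b + √((b : ℝ) ^ 2 - 4)) / 2) ∨
      (1 ≤ b ∧ α = (b + √((b : ℝ) ^ 2 + 4)) / 2)) :
    ∃ β σ, IsQuadraticPisotUnit α β b σ := by
  rcases h with ⟨hb, hα⟩ | ⟨hb, hα⟩
  · have hb' : (3 : ℝ) ≤ b := by exact_mod_cast hb
    refine ⟨_, 1, of_sqrt (by simpa using hα) ?_ ?_ isUnit_one⟩
    · linarith [Real.sqrt_nonneg ((b : ℝ) ^ 2 - 4)]
    · push_cast
      nlinarith
  · have hb' : (1 : ℝ) ≤ b := by exact_mod_cast hb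
    have hsqrt : 2 < √((b : ℝ) ^ 2 + 4) := (Real.lt_sqrt zero_le_two).2 (by nlinarith)
    refine ⟨_, -1, of_sqrt (by simpa using hα) ?_ ?_ isUnit_one.neg⟩
    · linarith
    · push_cast
      nlinarith

variable {α β : ℝ} {b σ : ℤ}

theorem pos (h : IsQuadraticPisotUnit α β b σ) : 0 < α := zero_lt_one.trans h.one_lt

theorem inv_lt_one (h : IsQuadraticPisotUnit α β b σ) : α⁻¹ < 1 := inv_lt_one_of_one_lt₀ h.one_lt

theorem conj_eq (h : IsQuadraticPisotUnit α β b σ) : β = σ * α⁻¹ :=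
  (eq_mul_inv_iff_mul_eq₀ h.pos.ne').2 ((mul_comm β α).trans h.mul_conj)

theorem abs_norm (h : IsQuadraticPisotUnit α β b σ) : |(σ : ℝ)| = 1 := by
  exact_mod_cast Int.isUnit_iff_abs_eq.1 h.isUnit_norm

theorem abs_conj (h : IsQuadraticPisotUnit α β b σ) : |β| = α⁻¹ := by
  rw [h.conj_eq, abs_mul, h.abs_norm, one_mul, abs_of_pos (inv_pos.2 h.pos)]

theorem sub_conj_pos (h : IsQuadraticPisotUnit α β b σ) : 0 < α - β := by
  linarith [le_abs_self β, h.abs_conj, h.inv_lt_one, h.one_lt]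

theorem trace_pos (h : IsQuadraticPisotUnit α β b σ) : (0 : ℝ) < b := by
  linarith [neg_abs_le β, h.abs_conj, h.inv_lt_one, h.one_lt, h.add_conj]

theorem intCast_ne (h : IsQuadraticPisotUnit α β b σ) (a : ℤ) : (a : ℝ) ≠ α := by
  rintro rfl
  have hdvd : a ∣ σ := ⟨b - a, by
    have hreal : (σ : ℝ) = a * (b - a) := by rw [← h.mul_conj, ← h.add_conj]; ring
    exact_mod_cast hreal⟩
  have hone : 1 < a := by exact_mod_cast h.one_lt
  rcases Int.isUnit_iff.1 (isUnit_of_dvd_unit hdvd h.isUnit_norm) with ha | ha <;> lia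

theorem exists_roundingError_recurrence (h : IsQuadraticPisotUnit α β b σ) (ξ : ℝ) :
    ∃ s : ℕ → ℤ, ∀ n, roundingError α ξ (n + 2) =
      b * roundingError α ξ (n + 1) - σ * roundingError α ξ n - s n := by
  refine ⟨fun n => round (ξ * α ^ (n + 2)) - b * round (ξ * α ^ (n + 1)) + σ * round (ξ * α ^ n),
    fun n => ?_⟩
  simp only [roundingError]
  push_cast
  linear_combination ξ * α ^ (n + 1) * h.add_conj - ξ * α ^ n * h.mul_conj

section Recurrence

variable {ε : ℕ → ℝ} {s : ℕ → ℤ}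

-- `Qₙ = εₙ₊₁ - β εₙ` and `Pₙ = εₙ₊₁ - α εₙ` satisfy `Qₙ₊₁ = α Qₙ - sₙ` and `Pₙ₊₁ = β Pₙ - sₙ`, and
-- `(α - β) εₙ = Qₙ - Pₙ`; each further term unfolds `Q` once forwards and `P` once backwards.
theorem sub_mul_eq_sum_foldedDigit_add (h : IsQuadraticPisotUnit α β b σ)
    (hrec : ∀ n, ε (n + 2) = b * ε (n + 1) - σ * ε n - s n) {c N : ℕ} (hN : N ≤ c) :
    (α - β) * ε (c + 1) = ∑ k ∈ Finset.range (N + 1), foldedDigit s σ c k * α⁻¹ ^ k +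
      (α⁻¹ ^ N * (ε (c + N + 2) - β * ε (c + N + 1)) -
        β ^ (N + 1) * (ε (c - N + 1) - α * ε (c - N))) := by
  simp only [← h.add_conj, ← h.mul_conj] at hrec
  induction N with
  | zero =>
    simp only [zero_add, add_zero, Nat.sub_zero, Finset.sum_range_one, foldedDigit, pow_zero,
      pow_one]
    linear_combination -hrec c
  | succ N ih =>
    obtain ⟨j, rfl⟩ := Nat.exists_eq_add_of_le hN
    have hforward := hrec (N + 1 + j + N + 1)
    have hbackward := hrec j
    have hpow : β ^ (N + 1) = σ ^ (N + 1) * α⁻¹ ^ (N + 1) := by rw [h.conj_eq, mul_pow]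
    have hinv : α⁻¹ ^ N = α * α⁻¹ ^ (N + 1) := by
      rw [pow_succ', mul_inv_cancel_left₀ h.pos.ne']
    rw [ih (by lia), Finset.sum_range_succ _ (N + 1)]
    have hj : N + 1 + j - N = j + 1 := by lia
    have hj' : N + 1 + j - (N + 1) = j := by lia
    simp only [foldedDigit, hj, hj', ← add_assoc] at hforward ⊢
    push_cast
    linear_combination (ε (N + 1 + j + N + 2) - β * ε (N + 1 + j + N + 1)) * hinv
      - α⁻¹ ^ (N + 1) * hforward - β ^ (N + 1) * hbackward + s j * hpow

theorem abs_sub_mul_sub_sum_foldedDigit_le (h : IsQuadraticPisotUnit α β b σ)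
    (hrec : ∀ n, ε (n + 2) = b * ε (n + 1) - σ * ε n - s n) {M : ℝ} (hε : ∀ n, |ε n| ≤ M)
    {c N : ℕ} (hN : N ≤ c) :
    |(α - β) * ε (c + 1) - ∑ k ∈ Finset.range (N + 1), foldedDigit s σ c k * α⁻¹ ^ k| ≤
      4 * M * α⁻¹ ^ N := by
  have hinv : 0 < α⁻¹ := inv_pos.2 h.pos
  have hM : 0 ≤ M := (abs_nonneg _).trans (hε 0)
  have hcomb (x : ℝ) (i : ℕ) : |ε (i + 1) - x * ε i| ≤ (1 + |x|) * M := by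
    calc _ ≤ |ε (i + 1)| + |x| * |ε i| := by rw [← abs_mul]; exact abs_sub _ _
      _ ≤ M + |x| * M := by gcongr <;> exact hε _
      _ = _ := by ring
  rw [h.sub_mul_eq_sum_foldedDigit_add hrec hN, add_sub_cancel_left]
  calc _ ≤ α⁻¹ ^ N * |ε (c + N + 2) - β * ε (c + N + 1)| +
          α⁻¹ ^ (N + 1) * |ε (c - N + 1) - α * ε (c - N)| := by
        refine (abs_sub _ _).trans_eq ?_
        rw [abs_mul, abs_mul, abs_pow, abs_pow, h.abs_conj, abs_of_pos hinv]
    _ ≤ α⁻¹ ^ N * ((1 + α⁻¹) * M) + α⁻¹ ^ (N + 1) * ((1 + α) * M) := by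
        gcongr
        · exact (hcomb β _).trans_eq (by rw [h.abs_conj])
        · exact (hcomb α _).trans_eq (by rw [abs_of_pos h.pos])
    _ = 2 * (1 + α⁻¹) * M * α⁻¹ ^ N := by
        linear_combination M * α⁻¹ ^ N * inv_mul_cancel₀ h.pos.ne'
    _ ≤ 4 * M * α⁻¹ ^ N := by
        gcongr
        nlinarith [h.inv_lt_one]

theorem eventually_abs_le_of_limsup_lt (h : IsQuadraticPisotUnit α β b σ)
    (hrec : ∀ n, ε (n + 2) = b * ε (n + 1) - σ * ε n - s n)
    (hbdd : atTop.IsBoundedUnder (· ≤ ·) fun n => |ε n|) {m : ℤ}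
    (hm : (2 + b) * limsup (fun n => |ε n|) atTop < m + 1) : ∀ᶠ n in atTop, |s n| ≤ m := by
  have hb : (0 : ℝ) < b := h.trace_pos
  have hsmall : ∀ᶠ n in atTop, |ε n| < (m + 1) / (2 + b) :=
    eventually_lt_of_limsup_lt ((lt_div_iff₀' (by positivity)).2 hm) hbdd
  filter_upwards [hsmall, (tendsto_add_atTop_nat 1).eventually hsmall,
    (tendsto_add_atTop_nat 2).eventually hsmall] with n h₀ h₁ h₂
  have habs : |(s n : ℝ)| < m + 1 := by
    calc |(s n : ℝ)| = |b * ε (n + 1) - σ * ε n - ε (n + 2)| := by rw [hrec]; ring_nf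
      _ ≤ |b * ε (n + 1)| + |σ * ε n| + |ε (n + 2)| :=
          (abs_sub _ _).trans (add_le_add_left (abs_sub _ _) _)
      _ = b * |ε (n + 1)| + |ε n| + |ε (n + 2)| := by
          rw [abs_mul, abs_mul, h.abs_norm, one_mul, abs_of_pos hb]
      _ < b * ((m + 1) / (2 + b)) + (m + 1) / (2 + b) + (m + 1) / (2 + b) := by gcongr
      _ = m + 1 := by field_simp; ring
  exact Int.lt_add_one_iff.1 (by exact_mod_cast habs)

theorem exists_mem_digitPoints_abs_sub_le (h : IsQuadraticPisotUnit α β b σ)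
    (hrec : ∀ n, ε (n + 2) = b * ε (n + 1) - σ * ε n - s n) {M : ℝ} (hε : ∀ n, |ε n| ≤ M) {m : ℤ}
    (hm : (2 + b) * limsup (fun n => |ε n|) atTop < m + 1) (N : ℕ) :
    ∃ x ∈ digitPoints α β m N,
      |limsup (fun n => |ε n|) atTop - x| ≤ (1 + 4 * M / (α - β)) * α⁻¹ ^ N := by
  have hbdd : atTop.IsBoundedUnder (· ≤ ·) fun n => |ε n| := isBoundedUnder_of ⟨M, hε⟩
  have hcobdd : atTop.IsCoboundedUnder (· ≤ ·) fun n => |ε n| :=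
    (isBoundedUnder_of ⟨0, fun n => abs_nonneg (ε n)⟩ :
      atTop.IsBoundedUnder (· ≥ ·) fun n => |ε n|).isCoboundedUnder_le
  obtain ⟨n₀, hs⟩ := eventually_atTop.1 (h.eventually_abs_le_of_limsup_lt hrec hbdd hm)
  obtain ⟨n, hn, hnear⟩ := frequently_atTop.1 (frequently_abs_limsup_sub_lt hbdd hcobdd
    (pow_pos (inv_pos.2 h.pos) N)) (n₀ + N + 1)
  obtain ⟨c, rfl⟩ : ∃ c, n = c + 1 := ⟨n - 1, by lia⟩
  set S := ∑ k ∈ Finset.range (N + 1), foldedDigit s σ c k * α⁻¹ ^ k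
  refine ⟨|S / (α - β)|, abs_sum_div_mem_digitPoints α β fun k hk =>
    abs_foldedDigit_le h.isUnit_norm hs (by lia), ?_⟩
  have htrunc : |ε (c + 1) - S / (α - β)| ≤ 4 * M / (α - β) * α⁻¹ ^ N := by
    have hδ := h.sub_conj_pos
    rw [sub_div' hδ.ne', abs_div, abs_of_pos hδ, div_mul_eq_mul_div, mul_comm (ε _)]
    gcongr
    exact h.abs_sub_mul_sub_sum_foldedDigit_le hrec hε (by lia)
  calc _ ≤ |limsup (fun n => |ε n|) atTop - (|ε (c + 1)|)| + |(|ε (c + 1)| - |S / (α - β)|)| :=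
        abs_sub_le _ _ _
    _ ≤ α⁻¹ ^ N + 4 * M / (α - β) * α⁻¹ ^ N :=
        add_le_add hnear.le ((abs_abs_sub_abs_le_abs_sub _ _).trans htrunc)
    _ = _ := by ring

end Recurrence

theorem specL_inter_Icc_subset_iUnion_closedBall (h : IsQuadraticPisotUnit α β b σ) (t : ℝ)
    (N : ℕ) :
    specL α ∩ Set.Icc 0 t ⊆ ⋃ x ∈ digitPoints α β ⌊(2 + (b : ℝ)) * t⌋ N,
      Metric.closedBall x ((1 + 2 / (α - β)) * α⁻¹ ^ N) := by
  rintro _ ⟨⟨ξ, rfl⟩, -, hle⟩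
  have hm : (2 + b) * limsupDist α ξ < ⌊(2 + (b : ℝ)) * t⌋ + 1 :=
    (mul_le_mul_of_nonneg_left hle (by linarith [h.trace_pos])).trans_lt (Int.lt_floor_add_one _)
  rw [limsupDist_eq_limsup_abs_roundingError] at hm ⊢
  obtain ⟨s, hrec⟩ := h.exists_roundingError_recurrence ξ
  obtain ⟨x, hx, hdist⟩ :=
    h.exists_mem_digitPoints_abs_sub_le hrec (abs_roundingError_le α ξ) hm N
  refine Set.mem_iUnion₂.2 ⟨x, hx, Metric.mem_closedBall.2 (hdist.trans_eq ?_)⟩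
  norm_num

theorem dimH_specL_inter_Icc_le (h : IsQuadraticPisotUnit α β b σ) {t : ℝ} (ht : 0 ≤ t) :
    dimH (specL α ∩ Set.Icc 0 t) ≤
      ENNReal.ofReal (Real.log (4 * ⌊(2 + (b : ℝ)) * t⌋ + 1) / Real.log α) := by
  have hb := h.trace_pos
  have hδ := h.sub_conj_pos
  have hm : 0 ≤ ⌊(2 + (b : ℝ)) * t⌋ := Int.floor_nonneg.2 (by positivity)
  have hm' : (0 : ℝ) ≤ ⌊(2 + (b : ℝ)) * t⌋ := by exact_mod_cast hm
  exact dimH_le_of_forall_subset_iUnion_closedBall h.one_lt (by positivity) (by linarith)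
    (card_digitPoints_le α β hm) (h.specL_inter_Icc_subset_iUnion_closedBall t)

theorem four_mul_floor_add_one_lt (h : IsQuadraticPisotUnit α β b σ) :
    4 * (⌊(α - 1) / 4⌋ : ℝ) + 1 < α := by
  refine lt_of_le_of_ne (by linarith [Int.floor_le ((α - 1) / 4)]) ?_
  exact_mod_cast h.intCast_ne (4 * ⌊(α - 1) / 4⌋ + 1)

theorem volume_specL_inter_Icc_eq_zero (h : IsQuadraticPisotUnit α β b σ) :
    MeasureTheory.volume (specL α ∩ Set.Icc 0 ((α - 1) / (4 * ((b : ℝ) + 2)))) = 0 := by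
  have hb := h.trace_pos
  have hone := h.one_lt
  have hfloor : (0 : ℝ) ≤ ⌊(α - 1) / 4⌋ := by
    exact_mod_cast Int.floor_nonneg.2 (by linarith : 0 ≤ (α - 1) / 4)
  have hscale : (2 + (b : ℝ)) * ((α - 1) / (4 * (b + 2))) = (α - 1) / 4 := by
    field_simp
    ring
  have hdim : dimH (specL α ∩ Set.Icc 0 ((α - 1) / (4 * ((b : ℝ) + 2)))) < (1 : NNReal) := by
    refine (h.dimH_specL_inter_Icc_le (div_nonneg (by linarith) (by linarith))).trans_lt ?_
    rw [hscale, ENNReal.coe_one, ENNReal.ofReal_lt_one, div_lt_one (Real.log_pos hone)]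
    exact Real.log_lt_log (by linarith [hfloor]) h.four_mul_floor_add_one_lt
  rw [← MeasureTheory.hausdorffMeasure_real]
  exact_mod_cast hausdorffMeasure_of_dimH_lt hdim

end IsQuadraticPisotUnit

theorem stmt2 (b : ℤ) (α : ℝ)
    (h : (3 ≤ b ∧ α = ((b : ℝ) + Real.sqrt ((b : ℝ) ^ 2 - 4)) / 2) ∨
         (1 ≤ b ∧ α = ((b : ℝ) + Real.sqrt ((b : ℝ) ^ 2 + 4)) / 2))
    (t : ℝ) (ht : t ∈ Set.Icc (0 : ℝ) (1 / 2)) :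
    dimH (specL α ∩ Set.Icc 0 t) ≤
      ENNReal.ofReal
        (Real.log (4 * (⌊(2 + (b : ℝ)) * t⌋ : ℝ) + 1) / Real.log α) ∧
    MeasureTheory.volume (specL α ∩ Set.Icc 0 ((α - 1) / (4 * ((b : ℝ) + 2)))) = 0 := by
  obtain ⟨β, σ, hα⟩ := IsQuadraticPisotUnit.exists_of_eq h
  exact ⟨hα.dimH_specL_inter_Icc_le ht.1, hα.volume_specL_inter_Icc_eq_zero⟩
end

section
/- For any integer a ≥ 2, 𝓛(a) ∩ (0, (1/a)·E(1/a)] = { (1/a)·E^{(k)}(1/a) : k = 0, 1, 2, … } ∪ { (1/a)·E(1/a) }. That is, the elements of 𝓛(a) lying in (0, (1/a)E(1/a)] are exactly the values (1/a)E^{(k)}(1/a) for k ≥ 0 together with the single limit point (1/a)E(1/a). -/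
/-- `E(X) = (1 − (1−X)·∏_{n=0}^{∞}(1−X^{2^n}))/(2X)`. -/
noncomputable def Efun (X : ℝ) : ℝ :=
  (1 - (1 - X) * ∏' n : ℕ, (1 - X ^ (2 ^ n))) / (2 * X)

/-- `E^{(k)}(X) = (1 + X^{2^k} − (1−X)·∏_{m=0}^{k−1}(1−X^{2^m}))/(2X(1+X^{2^k}))`. -/
noncomputable def Ek (k : ℕ) (X : ℝ) : ℝ :=
  (1 + X ^ (2 ^ k) - (1 - X) * ∏ m ∈ Finset.range k, (1 - X ^ (2 ^ m))) /
    (2 * X * (1 + X ^ (2 ^ k)))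

open Filter Set Topology

/-!
Multiplying by `a` shifts the base-`a` expansion, so `ξ` with `limsup ‖ξ aⁿ‖ < 1 / a` is encoded,
up to a finite prefix, by the signs of `ξ aⁿ - round (ξ aⁿ)`, an infinite binary word; with
`X = 1 / a` the distance `‖ξ aⁿ‖` is `|(1 - X) ∑ⱼ w (n + j) Xʲ - w n|`.

The Thue–Morse substitution `0 ↦ 01`, `1 ↦ 10` turns the limsup of these distances from `y` at
parameter `X ^ 2` into `(X + (1 - X) y) / (1 + X)` at parameter `X`. Iterating it on the zero word
gives the values `X * Ek k X`, and its fixed point, the Thue–Morse word, gives `X * Efun X`.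

Conversely `X * Efun X` is the value of the Thue–Morse word `0110100…`, and for `X ≤ 1 / 2` values
are monotone for the lexicographic order. So in a word whose distances all stay below `X * Efun X`
no factor that starts with `0` exceeds the Thue–Morse prefix of its length, and by symmetry the
same holds for the complement of the word. This forces the word to be constant or to be, after a
shift, the image of a word under the substitution, and one descends from `X` to `X ^ 2`. The gap
to `X * Efun X` does not shrink along the descent, while `X * Efun X ≤ X`, so the descent stops.
-/

theorem pow_mem_Ioo_zero_one {X : ℝ} (hX : X ∈ Ioo 0 1) {n : ℕ} (hn : n ≠ 0) :
    X ^ n ∈ Ioo 0 1 :=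
  ⟨pow_pos hX.1 n, pow_lt_one₀ hX.1.le hX.2 hn⟩

theorem sq_mem_Ioo_zero_one {X : ℝ} (hX : X ∈ Ioo 0 1) : X ^ 2 ∈ Ioo 0 1 :=
  pow_mem_Ioo_zero_one hX two_ne_zero

theorem pow_two_pow_mem_Ioo_zero_one {X : ℝ} (hX : X ∈ Ioo 0 1) (n : ℕ) :
    X ^ 2 ^ n ∈ Ioo 0 1 :=
  pow_mem_Ioo_zero_one hX (pow_ne_zero n two_ne_zero)

theorem limsup_eq_limsup_even {α : Type*} [ConditionallyCompleteLattice α] {u : ℕ → α}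
    (hle : IsBoundedUnder (· ≤ ·) atTop u) (hge : IsBoundedUnder (· ≥ ·) atTop u)
    (hodd : ∀ n, u (2 * n + 1) ≤ u (2 * n)) :
    limsup u atTop = limsup (fun n ↦ u (2 * n)) atTop := by
  have tendsto_double : Tendsto (fun n : ℕ ↦ 2 * n) atTop atTop :=
    tendsto_id.const_mul_atTop' two_pos
  have hle_even := tendsto_double.isBoundedUnder_comp hle
  have hge_even := tendsto_double.isBoundedUnder_comp hge
  have le_even (n : ℕ) : u n ≤ u (2 * (n / 2)) := by
    obtain ⟨c, rfl | rfl⟩ := Nat.even_or_odd' n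
    · simp
    · simpa [Nat.mul_add_div] using hodd c
  apply le_antisymm
  · have hhalf : limsup (fun n ↦ u (2 * (n / 2))) atTop = limsup (fun n ↦ u (2 * n)) atTop := by
      conv_rhs => rw [← map_div_atTop_eq_nat 2 two_pos, ← limsup_comp]
      rfl
    rw [← hhalf]
    exact limsup_le_limsup (.of_forall le_even) hge.isCoboundedUnder_le
      ((Nat.tendsto_div_const_atTop two_ne_zero).isBoundedUnder_comp hle_even)
  · change limsup (u ∘ fun n ↦ 2 * n) atTop ≤ _
    rw [limsup_comp]
    exact limsup_le_limsup_of_le tendsto_double hge_even.isCoboundedUnder_le hle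

/-- The action of the Thue–Morse substitution on values of words: a value `y` at parameter `X ^ 2`
becomes `renorm X y` at parameter `X`. -/
noncomputable def renorm (X y : ℝ) : ℝ := (X + (1 - X) * y) / (1 + X)

section Renorm

variable {X y : ℝ}

theorem continuous_renorm (X : ℝ) : Continuous (renorm X) := by
  unfold renorm
  fun_prop

theorem renorm_sub_renorm (X y z : ℝ) :
    renorm X y - renorm X z = (1 - X) / (1 + X) * (y - z) := by
  unfold renorm
  ring

theorem renorm_strictMono (hX : X ∈ Ioo 0 1) : StrictMono (renorm X) := fun y z hyz ↦ by
  have hfactor : 0 < (1 - X) / (1 + X) := div_pos (sub_pos.2 hX.2) (by linarith [hX.1])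
  rw [← sub_pos, renorm_sub_renorm]
  exact mul_pos hfactor (sub_pos.2 hyz)

theorem renorm_pos (hX : X ∈ Ioo 0 1) (hy : 0 ≤ y) : 0 < renorm X y :=
  div_pos (add_pos_of_pos_of_nonneg hX.1 (mul_nonneg (sub_pos.2 hX.2).le hy)) (by linarith [hX.1])

theorem renorm_sub_renorm_le (hX : X ∈ Ioo 0 1) {z : ℝ} (hzy : z ≤ y) :
    renorm X y - renorm X z ≤ y - z := by
  have hfactor : (1 - X) / (1 + X) ≤ 1 := (div_le_one (by linarith [hX.1])).2 (by linarith [hX.1])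
  rw [renorm_sub_renorm]
  exact mul_le_of_le_one_left (sub_nonneg.2 hzy) hfactor

theorem mul_renorm_one (X : ℝ) : X * renorm X 1 = renorm X 0 := by
  unfold renorm
  ring

theorem one_sub_two_mul_renorm (hX : X ∈ Ioo 0 1) (y : ℝ) :
    1 - 2 * renorm X y = (1 - X) / (1 + X) * (1 - 2 * y) := by
  have : 1 + X ≠ 0 := by linarith [hX.1]
  unfold renorm
  field_simp
  ring

end Renorm

/-! ### The values `X * Ek k X` and `X * Efun X` -/

section Values

variable {X : ℝ}

theorem mul_Ek_zero (hX : X ∈ Ioo 0 1) : X * Ek 0 X = renorm X 0 := by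
  have := hX.1
  simp only [Ek, renorm, pow_zero, pow_one, Finset.range_zero, Finset.prod_empty]
  field_simp
  ring

theorem prod_range_succ_one_sub_pow_two_pow (X : ℝ) (k : ℕ) :
    ∏ m ∈ Finset.range (k + 1), (1 - X ^ 2 ^ m) =
      (1 - X) * ∏ m ∈ Finset.range k, (1 - (X ^ 2) ^ 2 ^ m) := by
  rw [Finset.prod_range_succ', mul_comm, pow_zero, pow_one]
  simp_rw [← pow_mul, ← pow_succ']

theorem mul_Ek_succ (hX : X ∈ Ioo 0 1) (k : ℕ) :
    X * Ek (k + 1) X = renorm X (X ^ 2 * Ek k (X ^ 2)) := by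
  have := hX.1
  have hpow : (X ^ 2) ^ 2 ^ k = X ^ 2 ^ (k + 1) := by rw [← pow_mul, ← pow_succ']
  unfold Ek renorm
  rw [prod_range_succ_one_sub_pow_two_pow, hpow]
  have : 0 < X ^ 2 ^ (k + 1) := by positivity
  field_simp
  ring

theorem mul_Ek_pos (k : ℕ) : ∀ {X : ℝ}, X ∈ Ioo 0 1 → 0 < X * Ek k X := by
  induction k with
  | zero => exact fun hX ↦ mul_Ek_zero hX ▸ renorm_pos hX le_rfl
  | succ k ih =>
    exact fun hX ↦ mul_Ek_succ hX k ▸ renorm_pos hX (ih (sq_mem_Ioo_zero_one hX)).le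

theorem tendsto_prod_one_sub_pow_two_pow (hX : X ∈ Ioo 0 1) :
    Tendsto (fun N ↦ ∏ n ∈ Finset.range N, (1 - X ^ 2 ^ n)) atTop
      (𝓝 (∏' n : ℕ, (1 - X ^ 2 ^ n))) := by
  have hsum : Summable fun n : ℕ ↦ X ^ 2 ^ n :=
    .of_nonneg_of_le (fun n ↦ pow_nonneg hX.1.le _)
      (fun n ↦ pow_le_pow_of_le_one hX.1.le hX.2.le Nat.lt_two_pow_self.le)
      (summable_geometric_of_lt_one hX.1.le hX.2)
  have hprod : Multipliable fun n : ℕ ↦ 1 - X ^ 2 ^ n := by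
    simpa only [sub_eq_add_neg] using Real.multipliable_one_add_of_summable hsum.neg
  exact hprod.hasProd.tendsto_prod_nat

variable {f : ℝ → ℝ}

theorem one_sub_two_mul_eq_prod_of_eq_renorm (hf : ∀ X ∈ Ioo 0 1, f X = renorm X (f (X ^ 2)))
    (hX : X ∈ Ioo 0 1) (N : ℕ) :
    1 - 2 * f X = (1 - X) * (∏ n ∈ Finset.range N, (1 - X ^ 2 ^ n)) *
      ((1 - 2 * f (X ^ 2 ^ N)) / (1 - X ^ 2 ^ N)) := by
  have hX1 : 1 - X ≠ 0 := (sub_pos.2 hX.2).ne'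
  induction N with
  | zero => simp [mul_div_cancel₀ _ hX1]
  | succ N ih =>
    have hY := pow_two_pow_mem_Ioo_zero_one hX N
    rw [ih, Finset.prod_range_succ, pow_succ 2 N, pow_mul, hf _ hY, one_sub_two_mul_renorm hY]
    generalize X ^ 2 ^ N = Y at hY
    have h₁ : 1 - Y ≠ 0 := (sub_pos.2 hY.2).ne'
    have h₂ : 1 + Y ≠ 0 := by linarith [hY.1]
    have h₃ : 1 - Y ^ 2 = (1 - Y) * (1 + Y) := by ring
    rw [h₃]
    field_simp

theorem eq_mul_Efun_of_eq_renorm (hf : ∀ X ∈ Ioo 0 1, f X = renorm X (f (X ^ 2)))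
    (hbound : ∀ X ∈ Ioo 0 1, f X ∈ Icc 0 X) (hX : X ∈ Ioo 0 1) : f X = X * Efun X := by
  have hpow : Tendsto (fun N : ℕ ↦ X ^ 2 ^ N) atTop (𝓝 0) :=
    (tendsto_pow_atTop_nhds_zero_of_lt_one hX.1.le hX.2).comp
      (tendsto_pow_atTop_atTop_of_one_lt one_lt_two)
  have hfbound (N : ℕ) := hbound _ (pow_two_pow_mem_Ioo_zero_one hX N)
  have hfpow : Tendsto (fun N : ℕ ↦ f (X ^ 2 ^ N)) atTop (𝓝 0) :=
    squeeze_zero (fun N ↦ (hfbound N).1) (fun N ↦ (hfbound N).2) hpow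
  have hratio : Tendsto (fun N : ℕ ↦ (1 - 2 * f (X ^ 2 ^ N)) / (1 - X ^ 2 ^ N)) atTop (𝓝 1) := by
    simpa [Pi.div_def] using
      ((hfpow.const_mul 2).const_sub 1).div (hpow.const_sub 1) (by norm_num)
  have hprod : 1 - 2 * f X = (1 - X) * ∏' n : ℕ, (1 - X ^ 2 ^ n) := by
    have hlim := ((tendsto_prod_one_sub_pow_two_pow hX).const_mul (1 - X)).mul hratio
    simp only [← one_sub_two_mul_eq_prod_of_eq_renorm hf hX, mul_one] at hlim
    exact tendsto_const_nhds_iff.1 hlim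
  have := hX.1
  rw [Efun, ← hprod]
  field_simp
  ring

end Values

/-! ### Binary words, their values and deviations -/

/-- Infinite binary words. -/
abbrev BinaryWord : Type := ℕ → Bool

namespace BinaryWord

/-- The word that remains after the first `n` letters of `w`. -/
def shift (n : ℕ) (w : BinaryWord) : BinaryWord := fun j ↦ w (n + j)

/-- A letter as a real number: `1` for `true` and `0` for `false`. -/
def digit (b : Bool) : ℝ := bif b then 1 else 0

/-- The number `(1 - X) ∑ⱼ wⱼ Xʲ` with digit sequence `w`, scaled so that values fill `[0, 1]`. -/
noncomputable def value (X : ℝ) (w : BinaryWord) : ℝ := (1 - X) * ∑' j, digit (w j) * X ^ j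

/-- The distance from the value of `w` to its first digit; for `X = 1 / a` the distances
`‖ξ * a ^ n‖` are the deviations of the shifts of a word. -/
noncomputable def deviation (X : ℝ) (w : BinaryWord) : ℝ := |value X w - digit (w 0)|

/-- The limsup of the deviations of the shifts of `w`, the counterpart of `limsupDist`. -/
noncomputable def limsupDeviation (X : ℝ) (w : BinaryWord) : ℝ :=
  limsup (fun n ↦ deviation X (shift n w)) atTop

variable {X : ℝ}

@[simp] theorem digit_true : digit true = 1 := rfl

@[simp] theorem digit_false : digit false = 0 := rfl

theorem digit_not (b : Bool) : digit (!b) = 1 - digit b := by cases b <;> simp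

theorem digit_mem_Icc (b : Bool) : digit b ∈ Icc 0 1 := by cases b <;> simp

@[simp] theorem shift_apply (n : ℕ) (w : BinaryWord) (j : ℕ) : shift n w j = w (n + j) := rfl

theorem shift_zero (w : BinaryWord) : shift 0 w = w := funext fun j ↦ congrArg w (zero_add j)

theorem shift_shift (m n : ℕ) (w : BinaryWord) : shift m (shift n w) = shift (n + m) w :=
  funext fun j ↦ congrArg w (add_assoc n m j).symm

theorem summable_digit_mul_pow (hX : X ∈ Ioo 0 1) (w : BinaryWord) :
    Summable fun j ↦ digit (w j) * X ^ j :=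
  .of_nonneg_of_le (fun j ↦ mul_nonneg (digit_mem_Icc _).1 (pow_nonneg hX.1.le j))
    (fun j ↦ mul_le_of_le_one_left (pow_nonneg hX.1.le j) (digit_mem_Icc _).2)
    (summable_geometric_of_lt_one hX.1.le hX.2)

theorem value_eq_digit_add (hX : X ∈ Ioo 0 1) (w : BinaryWord) :
    value X w = (1 - X) * digit (w 0) + X * value X (shift 1 w) := by
  have htail : ∑' j, digit (w (j + 1)) * X ^ (j + 1) = X * ∑' j, digit (shift 1 w j) * X ^ j := by
    rw [← tsum_mul_left]
    exact tsum_congr fun j ↦ by rw [shift_apply, add_comm 1 j]; ring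
  rw [value, value, (summable_digit_mul_pow hX w).tsum_eq_zero_add, htail]
  ring

theorem value_const (hX : X ∈ Ioo 0 1) (b : Bool) : value X (fun _ ↦ b) = digit b := by
  rw [value, tsum_mul_left, tsum_geometric_of_lt_one hX.1.le hX.2, mul_left_comm,
    mul_inv_cancel₀ (sub_pos.2 hX.2).ne', mul_one]

theorem value_compl (hX : X ∈ Ioo 0 1) (w : BinaryWord) : value X wᶜ = 1 - value X w := by
  have hone : 1 = value X fun _ ↦ true := (value_const hX true).symm
  rw [hone, value, value, value, ← mul_sub,
    ← (summable_digit_mul_pow hX _).tsum_sub (summable_digit_mul_pow hX w)]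
  simp only [Pi.compl_apply, Bool.compl_eq_bnot, digit_not, digit_true, sub_mul]

theorem value_nonneg (hX : X ∈ Ioo 0 1) (w : BinaryWord) : 0 ≤ value X w :=
  mul_nonneg (sub_pos.2 hX.2).le
    (tsum_nonneg fun j ↦ mul_nonneg (digit_mem_Icc _).1 (pow_nonneg hX.1.le j))

theorem value_le_one (hX : X ∈ Ioo 0 1) (w : BinaryWord) : value X w ≤ 1 := by
  linarith [value_compl hX w, value_nonneg hX wᶜ]

theorem value_le_of_head_false (hX : X ∈ Ioo 0 1) {w : BinaryWord} (hw : w 0 = false) :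
    value X w ≤ X := by
  rw [value_eq_digit_add hX, hw, digit_false, mul_zero, zero_add]
  exact mul_le_of_le_one_right hX.1.le (value_le_one hX _)

theorem eq_value_shift_of_recursion_of_bounded (hX : X ∈ Ioo 0 1) {w : BinaryWord}
    {z : ℕ → ℝ} {C : ℝ} (hz : ∀ n, z n = (1 - X) * digit (w n) + X * z (n + 1))
    (hC : ∀ n, |z n| ≤ C) (n : ℕ) : z n = value X (shift n w) := by
  have hstep (n : ℕ) :
      z n - value X (shift n w) = X * (z (n + 1) - value X (shift (n + 1) w)) := by
    rw [hz, value_eq_digit_add hX (shift n w), shift_shift, shift_apply, add_zero]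
    ring
  have hiter (j : ℕ) :
      z n - value X (shift n w) = X ^ j * (z (n + j) - value X (shift (n + j) w)) := by
    induction j with
    | zero => simp
    | succ j ih => rw [ih, hstep, pow_succ, mul_assoc, add_assoc]
  have hbound (j : ℕ) : |z n - value X (shift n w)| ≤ X ^ j * (C + 1) := by
    rw [hiter j, abs_mul, abs_of_pos (pow_pos hX.1 j)]
    refine mul_le_mul_of_nonneg_left ((abs_sub _ _).trans (add_le_add (hC _) ?_))
      (pow_pos hX.1 j).le
    rw [abs_of_nonneg (value_nonneg hX _)]
    exact value_le_one hX _
  have hlim : Tendsto (fun j ↦ X ^ j * (C + 1)) atTop (𝓝 0) := by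
    simpa using (tendsto_pow_atTop_nhds_zero_of_lt_one hX.1.le hX.2).mul_const (C + 1)
  exact sub_eq_zero.1 (abs_nonpos_iff.1 (ge_of_tendsto' hlim hbound))

theorem value_le_value_of_first_difference (hX : X ∈ Ioc 0 (1 / 2)) {k : ℕ} :
    ∀ {v w : BinaryWord}, (∀ j < k, v j = w j) → v k = false → w k = true →
      value X v ≤ value X w := by
  have hX' : X ∈ Ioo 0 1 := Ioc_subset_Ioo_right one_half_lt_one hX
  induction k with
  | zero =>
    intro v w _ hv hw
    have hv_le := value_le_of_head_false hX' hv
    have hw_tail := mul_nonneg hX.1.le (value_nonneg hX' (shift 1 w))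
    rw [value_eq_digit_add hX' w, hw, digit_true]
    linarith [hX.2]
  | succ k ih =>
    intro v w hagree hv hw
    have htail : value X (shift 1 v) ≤ value X (shift 1 w) := by
      refine ih (fun j hj ↦ ?_) ?_ ?_
      · simpa [add_comm] using hagree (j + 1) (by lia)
      · simpa [add_comm] using hv
      · simpa [add_comm] using hw
    rw [value_eq_digit_add hX' v, value_eq_digit_add hX' w, hagree 0 (by lia)]
    gcongr
    exact hX.1.le

theorem deviation_eq_value (hX : X ∈ Ioo 0 1) (w : BinaryWord) :
    deviation X w = value X (fun n ↦ w 0 ^^ w n) := by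
  cases h : w 0 with
  | false => simp [deviation, h, abs_of_nonneg (value_nonneg hX w)]
  | true =>
    have hcompl : (fun n ↦ true ^^ w n) = wᶜ := by ext n; simp
    rw [deviation, h, digit_true, hcompl, value_compl hX, abs_sub_comm,
      abs_of_nonneg (sub_nonneg.2 (value_le_one hX w))]

theorem deviation_nonneg (X : ℝ) (w : BinaryWord) : 0 ≤ deviation X w := abs_nonneg _

theorem deviation_le (hX : X ∈ Ioo 0 1) (w : BinaryWord) : deviation X w ≤ X := by
  rw [deviation_eq_value hX]
  exact value_le_of_head_false hX (by simp)

theorem isBoundedUnder_le_deviation (hX : X ∈ Ioo 0 1) (w : BinaryWord) :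
    IsBoundedUnder (· ≤ ·) atTop fun n ↦ deviation X (shift n w) :=
  isBoundedUnder_of ⟨X, fun _ ↦ deviation_le hX _⟩

theorem isBoundedUnder_ge_deviation (X : ℝ) (w : BinaryWord) :
    IsBoundedUnder (· ≥ ·) atTop fun n ↦ deviation X (shift n w) :=
  isBoundedUnder_of ⟨0, fun _ ↦ deviation_nonneg X _⟩

theorem limsupDeviation_mem_Icc (hX : X ∈ Ioo 0 1) (w : BinaryWord) :
    limsupDeviation X w ∈ Icc 0 X :=
  ⟨le_limsup_of_frequently_le (.of_forall fun _ ↦ deviation_nonneg X _)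
      (isBoundedUnder_le_deviation hX w),
    limsup_le_of_le (isBoundedUnder_ge_deviation X w).isCoboundedUnder_le
      (.of_forall fun _ ↦ deviation_le hX _)⟩

theorem limsupDeviation_shift (X : ℝ) (k : ℕ) (w : BinaryWord) :
    limsupDeviation X (shift k w) = limsupDeviation X w := by
  simp only [limsupDeviation, shift_shift, add_comm k]
  exact limsup_nat_add (fun n ↦ deviation X (shift n w)) k

theorem limsupDeviation_const (hX : X ∈ Ioo 0 1) (b : Bool) :
    limsupDeviation X (fun _ ↦ b) = 0 := by
  have hshift (n : ℕ) : shift n (fun _ ↦ b) = fun _ ↦ b := rfl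
  simp [limsupDeviation, deviation, hshift, value_const hX]

/-! ### The Thue–Morse substitution -/

/-- The Thue–Morse substitution, which replaces each letter `b` by the two letters `b, !b`. -/
def morse (w : BinaryWord) : BinaryWord := fun n ↦ w (n / 2) ^^ n.bodd

/-- The Thue–Morse word `0110100110010110…`, whose `n`-th letter is the parity of the binary digit
sum of `n`. -/
def thueMorse : BinaryWord := fun n ↦ (Nat.digits 2 n).sum.bodd

theorem morse_two_mul (w : BinaryWord) (n : ℕ) : morse w (2 * n) = w n := by
  simp [morse]

theorem morse_two_mul_add_one (w : BinaryWord) (n : ℕ) : morse w (2 * n + 1) = !w n := by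
  simp [morse, Nat.mul_add_div]

theorem morse_thueMorse : morse thueMorse = thueMorse := by
  funext n
  obtain rfl | hn := n.eq_zero_or_pos
  · rfl
  · have hmod : (n % 2).bodd = n.bodd := by
      conv_rhs => rw [← Nat.mod_add_div n 2]
      simp
    simp only [morse, thueMorse]
    rw [Nat.digits_def' one_lt_two hn, List.sum_cons, Nat.bodd_add, hmod, Bool.xor_comm]

theorem shift_two_mul_morse (n : ℕ) (w : BinaryWord) :
    shift (2 * n) (morse w) = morse (shift n w) := by
  funext j
  simp [morse, Nat.mul_add_div]

theorem value_morse (hX : X ∈ Ioo 0 1) (w : BinaryWord) :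
    value X (morse w) = renorm X (value (X ^ 2) w) := by
  have hX2 := sq_mem_Ioo_zero_one hX
  have hsummable := summable_digit_mul_pow hX2 w
  have hsummable_compl := summable_digit_mul_pow hX2 wᶜ
  have heven (j : ℕ) : digit (morse w (2 * j)) * X ^ (2 * j) = digit (w j) * (X ^ 2) ^ j := by
    rw [morse_two_mul, pow_mul]
  have hodd (j : ℕ) : digit (morse w (2 * j + 1)) * X ^ (2 * j + 1) =
      X * (digit (wᶜ j) * (X ^ 2) ^ j) := by
    rw [morse_two_mul_add_one, pow_succ, pow_mul, Pi.compl_apply, Bool.compl_eq_bnot]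
    ring
  have hsplit : ∑' j, digit (morse w j) * X ^ j =
      ∑' j, digit (w j) * (X ^ 2) ^ j + X * ∑' j, digit (wᶜ j) * (X ^ 2) ^ j := by
    rw [← tsum_even_add_odd (f := fun j ↦ digit (morse w j) * X ^ j)
      (hsummable.congr fun j ↦ (heven j).symm)
      ((hsummable_compl.mul_left X).congr fun j ↦ (hodd j).symm),
      tsum_congr heven, tsum_congr hodd, tsum_mul_left]
  have hcompl := value_compl hX2 w
  have hX1 : 1 + X ≠ 0 := by linarith [hX.1]
  rw [value, hsplit, renorm, eq_div_iff hX1]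
  simp only [value] at hcompl ⊢
  linear_combination X * hcompl

theorem deviation_morse (hX : X ∈ Ioo 0 1) (w : BinaryWord) :
    deviation X (morse w) = renorm X (deviation (X ^ 2) w) := by
  rw [deviation_eq_value hX, deviation_eq_value (sq_mem_Ioo_zero_one hX), ← value_morse hX]
  congr 1
  funext n
  simp [morse]

theorem deviation_shift_one_morse_le (hX : X ∈ Ioo 0 1) (w : BinaryWord) :
    deviation X (shift 1 (morse w)) ≤ renorm X 0 := by
  have htail : shift 1 (fun n ↦ shift 1 (morse w) 0 ^^ shift 1 (morse w) n) =
      morse fun n ↦ !w 0 ^^ w (n + 1) := by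
    funext n
    have hdiv : (1 + (1 + n)) / 2 = n / 2 + 1 := by lia
    simp [morse, hdiv]
  calc deviation X (shift 1 (morse w))
      = X * renorm X (value (X ^ 2) fun n ↦ !w 0 ^^ w (n + 1)) := by
        rw [deviation_eq_value hX, value_eq_digit_add hX, htail, value_morse hX]
        simp
    _ ≤ X * renorm X 1 := by
        gcongr
        · exact hX.1.le
        · exact (renorm_strictMono hX).monotone (value_le_one (sq_mem_Ioo_zero_one hX) _)
    _ = renorm X 0 := mul_renorm_one X

theorem limsupDeviation_morse (hX : X ∈ Ioo 0 1) (w : BinaryWord) :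
    limsupDeviation X (morse w) = renorm X (limsupDeviation (X ^ 2) w) := by
  have hX2 := sq_mem_Ioo_zero_one hX
  have hmono := (renorm_strictMono hX).monotone
  have heven (n : ℕ) : deviation X (shift (2 * n) (morse w)) =
      renorm X (deviation (X ^ 2) (shift n w)) := by
    rw [shift_two_mul_morse, deviation_morse hX]
  have hodd (n : ℕ) : deviation X (shift (2 * n + 1) (morse w)) ≤
      deviation X (shift (2 * n) (morse w)) := by
    rw [heven, ← shift_shift, shift_two_mul_morse]
    exact (deviation_shift_one_morse_le hX _).trans (hmono (deviation_nonneg _ _))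
  calc limsupDeviation X (morse w)
      = limsup (fun n ↦ deviation X (shift (2 * n) (morse w))) atTop :=
        limsup_eq_limsup_even (isBoundedUnder_le_deviation hX _)
          (isBoundedUnder_ge_deviation X _) hodd
    _ = limsup (renorm X ∘ fun n ↦ deviation (X ^ 2) (shift n w)) atTop := by
        simp only [heven, Function.comp_def]
    _ = renorm X (limsupDeviation (X ^ 2) w) :=
        (hmono.map_limsup_of_continuousAt _ (continuous_renorm X).continuousAt
          (isBoundedUnder_le_deviation hX2 w)
          (isBoundedUnder_ge_deviation _ w).isCoboundedUnder_le).symm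

theorem limsupDeviation_iterate_morse (k : ℕ) :
    ∀ {X : ℝ}, X ∈ Ioo 0 1 → limsupDeviation X (morse^[k + 1] fun _ ↦ false) = X * Ek k X := by
  induction k with
  | zero =>
    intro X hX
    rw [zero_add, Function.iterate_one, limsupDeviation_morse hX,
      limsupDeviation_const (sq_mem_Ioo_zero_one hX), mul_Ek_zero hX]
  | succ k ih =>
    intro X hX
    rw [Function.iterate_succ_apply', limsupDeviation_morse hX, ih (sq_mem_Ioo_zero_one hX),
      mul_Ek_succ hX]

theorem limsupDeviation_thueMorse (hX : X ∈ Ioo 0 1) :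
    limsupDeviation X thueMorse = X * Efun X :=
  eq_mul_Efun_of_eq_renorm (f := (limsupDeviation · thueMorse))
    (fun Y hY ↦ by simpa only [morse_thueMorse] using limsupDeviation_morse hY thueMorse)
    (fun _ hY ↦ limsupDeviation_mem_Icc hY thueMorse) hX

theorem value_thueMorse (hX : X ∈ Ioo 0 1) : value X thueMorse = X * Efun X :=
  eq_mul_Efun_of_eq_renorm (f := (value · thueMorse))
    (fun Y hY ↦ by simpa only [morse_thueMorse] using value_morse hY thueMorse)
    (fun _ hY ↦ ⟨value_nonneg hY _, value_le_of_head_false hY rfl⟩) hX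

theorem mul_Efun_eq_renorm (hX : X ∈ Ioo 0 1) :
    X * Efun X = renorm X (X ^ 2 * Efun (X ^ 2)) := by
  rw [← value_thueMorse hX, ← value_thueMorse (sq_mem_Ioo_zero_one hX), ← value_morse hX,
    morse_thueMorse]

theorem mul_Efun_le (hX : X ∈ Ioo 0 1) : X * Efun X ≤ X :=
  value_thueMorse hX ▸ value_le_of_head_false hX rfl

theorem mul_Ek_le_mul_Efun (k : ℕ) : ∀ {X : ℝ}, X ∈ Ioo 0 1 → X * Ek k X ≤ X * Efun X := by
  induction k with
  | zero =>
    intro X hX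
    have hX2 := sq_mem_Ioo_zero_one hX
    rw [mul_Ek_zero hX, mul_Efun_eq_renorm hX, ← value_thueMorse hX2]
    exact (renorm_strictMono hX).monotone (value_nonneg hX2 _)
  | succ k ih =>
    intro X hX
    rw [mul_Ek_succ hX, mul_Efun_eq_renorm hX]
    exact (renorm_strictMono hX).monotone (ih (sq_mem_Ioo_zero_one hX))

/-! ### Words with small deviations -/

section SmallDeviations

variable {w : BinaryWord}

theorem apply_eq_head_of_deviation_lt (hX : X ∈ Ioc 0 (1 / 2))
    (hw : deviation X w < value X thueMorse) {k : ℕ} (hk : thueMorse k = false)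
    (hagree : ∀ j < k, w j = (w 0 ^^ thueMorse j)) : w k = w 0 := by
  by_contra hne
  have hle : value X thueMorse ≤ value X (fun n ↦ w 0 ^^ w n) := by
    refine value_le_value_of_first_difference hX (k := k) (fun j hj ↦ ?_) hk ?_
    · simp [hagree j hj]
    · simpa using Ne.symm hne
  rw [← deviation_eq_value (Ioc_subset_Ioo_right one_half_lt_one hX)] at hle
  exact hw.not_ge hle

/-- The word `w` has a factor `011` or `100` at position `m`. In the image of a word under the
substitution, such a factor shows where the blocks `01`, `10` start. -/
def IsMarker (w : BinaryWord) (m : ℕ) : Prop := w (m + 1) = !w m ∧ w (m + 2) = !w m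

-- The Thue–Morse word starts with `0110100`, and the three zeros after the initial `011` are the
-- letters that smallness of the deviation forces.
theorem IsMarker.next (hX : X ∈ Ioc 0 (1 / 2)) {m : ℕ}
    (hw : deviation X (shift m w) < value X thueMorse) (hm : IsMarker w m) :
    w (m + 3) = !w (m + 2) ∧ (IsMarker w (m + 2) ∨ IsMarker w (m + 4)) := by
  have hforced := @apply_eq_head_of_deviation_lt X (shift m w) hX hw
  simp only [shift_apply, add_zero] at hforced
  obtain ⟨h1, h2⟩ := hm
  have h3 : w (m + 3) = w m := hforced (k := 3) rfl fun j hj ↦ by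
    interval_cases j <;> simp [h1, h2, thueMorse]
  refine ⟨by simp [h2, h3], ?_⟩
  by_cases h4 : w (m + 4) = w m
  · exact .inl (by simp [IsMarker, add_assoc, h2, h3, h4])
  · replace h4 : w (m + 4) = !w m := Bool.eq_not.2 h4
    have h5 : w (m + 5) = w m := hforced (k := 5) rfl fun j hj ↦ by
      interval_cases j <;> simp [h1, h2, h3, h4, thueMorse]
    have h6 : w (m + 6) = w m := hforced (k := 6) rfl fun j hj ↦ by
      interval_cases j <;> simp [h1, h2, h3, h4, h5, thueMorse]
    exact .inr (by simp [IsMarker, add_assoc, h4, h5, h6])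

theorem apply_add_two_mul_add_one_of_isMarker (hX : X ∈ Ioc 0 (1 / 2))
    (hw : ∀ n, deviation X (shift n w) < value X thueMorse) {k : ℕ} (hk : IsMarker w k) (n : ℕ) :
    w (k + 2 * n + 1) = !w (k + 2 * n) := by
  have hmarker (n : ℕ) : IsMarker w (k + 2 * n) ∨
      w (k + 2 * n + 1) = (!w (k + 2 * n)) ∧ IsMarker w (k + 2 * n + 2) := by
    induction n with
    | zero => exact .inl hk
    | succ n ih =>
      rw [show k + 2 * (n + 1) = k + 2 * n + 2 by ring]
      obtain hm | ⟨-, hm⟩ := ih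
      · obtain ⟨hne, hm' | hm'⟩ := hm.next hX (hw _)
        · exact .inl hm'
        · exact .inr ⟨hne, hm'⟩
      · exact .inl hm
  exact (hmarker n).elim And.left And.left

theorem alternating_of_forall_not_isMarker (hw : ∀ m, ¬IsMarker w m) {k : ℕ}
    (hk : w (k + 1) = !w k) (n : ℕ) : w (k + n + 1) = !w (k + n) := by
  induction n with
  | zero => exact hk
  | succ n ih =>
    have hne : w (k + n + 2) ≠ !w (k + n) := fun h ↦ hw (k + n) ⟨ih, h⟩
    rw [← ih] at hne
    exact Bool.eq_not.2 hne

theorem eq_const_or_exists_shift_eq_morse (hX : X ∈ Ioc 0 (1 / 2))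
    (hw : ∀ n, deviation X (shift n w) < value X thueMorse) :
    (∃ b, w = fun _ ↦ b) ∨ ∃ k v, shift k w = morse v := by
  by_cases hconst : ∀ n, w (n + 1) = w n
  · exact .inl ⟨w 0, funext fun n ↦ Nat.rec rfl (fun n ih ↦ (hconst n).trans ih) n⟩
  right
  suffices ∃ k, ∀ n, w (k + 2 * n + 1) = !w (k + 2 * n) by
    obtain ⟨k, hk⟩ := this
    refine ⟨k, fun n ↦ w (k + 2 * n), funext fun j ↦ ?_⟩
    obtain ⟨n, rfl | rfl⟩ := Nat.even_or_odd' j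
    · rw [morse_two_mul, shift_apply]
    · rw [morse_two_mul_add_one, shift_apply, ← hk n, add_assoc]
  by_cases hmarker : ∃ m, IsMarker w m
  · obtain ⟨k, hk⟩ := hmarker
    exact ⟨k, apply_add_two_mul_add_one_of_isMarker hX hw hk⟩
  · push Not at hconst hmarker
    obtain ⟨k, hk⟩ := hconst
    exact ⟨k, fun n ↦ alternating_of_forall_not_isMarker hmarker (Bool.eq_not.2 hk) (2 * n)⟩

theorem limsupDeviation_eq_zero_or_exists_renorm (hX : X ∈ Ioc 0 (1 / 2))
    (hw : limsupDeviation X w < X * Efun X) :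
    limsupDeviation X w = 0 ∨
      ∃ v, limsupDeviation X w = renorm X (limsupDeviation (X ^ 2) v) := by
  have hX' : X ∈ Ioo 0 1 := Ioc_subset_Ioo_right one_half_lt_one hX
  rw [← value_thueMorse hX'] at hw
  obtain ⟨N, hN⟩ := eventually_atTop.1
    (eventually_lt_of_limsup_lt hw (isBoundedUnder_le_deviation hX' w))
  have htail (n : ℕ) : deviation X (shift n (shift N w)) < value X thueMorse := by
    rw [shift_shift]
    exact hN _ le_self_add
  rw [← limsupDeviation_shift X N w]
  obtain ⟨b, hb⟩ | ⟨k, v, hv⟩ := eq_const_or_exists_shift_eq_morse hX htail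
  · exact .inl (hb ▸ limsupDeviation_const hX' b)
  · exact .inr ⟨v, by rw [← limsupDeviation_shift X k, hv, limsupDeviation_morse hX']⟩

theorem exists_limsupDeviation_eq_mul_Ek_of_gap (N : ℕ) :
    ∀ {X : ℝ} {w : BinaryWord}, X ∈ Ioc 0 (1 / 2) → 0 < limsupDeviation X w →
      X ^ 2 ^ N ≤ X * Efun X - limsupDeviation X w → ∃ k, limsupDeviation X w = X * Ek k X := by
  induction N with
  | zero =>
    intro X w hX hpos hgap
    have hle := mul_Efun_le (Ioc_subset_Ioo_right one_half_lt_one hX)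
    rw [pow_zero, pow_one] at hgap
    linarith
  | succ N ih =>
    intro X w hX hpos hgap
    have hX' : X ∈ Ioo 0 1 := Ioc_subset_Ioo_right one_half_lt_one hX
    have hX2 : X ^ 2 ∈ Ioc 0 (1 / 2) := ⟨pow_pos hX.1 2, by nlinarith [hX.1, hX.2]⟩
    have hlt : limsupDeviation X w < X * Efun X := by linarith [pow_pos hX.1 (2 ^ (N + 1))]
    obtain hzero | ⟨v, hv⟩ := limsupDeviation_eq_zero_or_exists_renorm hX hlt
    · exact absurd hzero hpos.ne'
    rw [hv] at hlt hgap ⊢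
    obtain hv0 | hv0 := (limsupDeviation_mem_Icc (sq_mem_Ioo_zero_one hX') v).1.eq_or_lt
    · exact ⟨0, by rw [← hv0, mul_Ek_zero hX']⟩
    · have hgap' : (X ^ 2) ^ 2 ^ N ≤ X ^ 2 * Efun (X ^ 2) - limsupDeviation (X ^ 2) v := by
        rw [mul_Efun_eq_renorm hX'] at hlt hgap
        rw [← pow_mul, ← pow_succ']
        exact hgap.trans (renorm_sub_renorm_le hX' ((renorm_strictMono hX').lt_iff_lt.1 hlt).le)
      obtain ⟨k, hk⟩ := ih hX2 hv0 hgap'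
      exact ⟨k + 1, by rw [hk, mul_Ek_succ hX']⟩

theorem exists_limsupDeviation_eq_mul_Ek (hX : X ∈ Ioc 0 (1 / 2)) (hpos : 0 < limsupDeviation X w)
    (hlt : limsupDeviation X w < X * Efun X) : ∃ k, limsupDeviation X w = X * Ek k X := by
  obtain ⟨N, hN⟩ := exists_pow_lt_of_lt_one (sub_pos.2 hlt) (hX.2.trans_lt one_half_lt_one)
  refine exists_limsupDeviation_eq_mul_Ek_of_gap N hX hpos (le_trans ?_ hN.le)
  exact pow_le_pow_of_le_one hX.1.le (hX.2.trans one_half_lt_one.le) Nat.lt_two_pow_self.le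

end SmallDeviations

/-! ### Words and powers of an integer -/

section Integer

variable {a : ℕ}

theorem one_div_natCast_mem_Ioc (ha : 2 ≤ a) : 1 / (a : ℝ) ∈ Ioc 0 (1 / 2) :=
  ⟨by positivity, one_div_le_one_div_of_le two_pos (by exact_mod_cast ha)⟩

theorem one_div_natCast_mem_Ioo (ha : 2 ≤ a) : 1 / (a : ℝ) ∈ Ioo 0 1 :=
  Ioc_subset_Ioo_right one_half_lt_one (one_div_natCast_mem_Ioc ha)

theorem distNearestInt_eq_abs_sub {x : ℝ} {m : ℤ} (h : |x - m| ≤ 1 / 2) :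
    distNearestInt x = |x - m| := by
  refine le_antisymm (round_le x m) ?_
  obtain hm | hm := eq_or_ne (round x) m
  · rw [distNearestInt, hm]
  · have hone : (1 : ℝ) ≤ |(round x : ℝ) - m| := by
      exact_mod_cast Int.one_le_abs (sub_ne_zero.2 hm)
    have htriangle := abs_sub_le (round x : ℝ) x m
    rw [abs_sub_comm (round x : ℝ) x] at htriangle
    unfold distNearestInt
    linarith

theorem digit_eq_intCast (b : Bool) : ∃ d : ℤ, digit b = d := by
  cases b
  · exact ⟨0, by simp⟩
  · exact ⟨1, by simp⟩

theorem exists_value_mul_pow_eq_add_intCast (ha : 2 ≤ a) (w : BinaryWord) (n : ℕ) :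
    ∃ m : ℤ, value (1 / a) w * a ^ n = value (1 / a) (shift n w) + m := by
  induction n with
  | zero => exact ⟨0, by rw [shift_zero, pow_zero, mul_one, Int.cast_zero, add_zero]⟩
  | succ n ih =>
    obtain ⟨m, hm⟩ := ih
    obtain ⟨d, hd⟩ := digit_eq_intCast (w n)
    have hrec := value_eq_digit_add (one_div_natCast_mem_Ioo ha) (shift n w)
    rw [shift_shift, shift_apply, add_zero, hd] at hrec
    refine ⟨m * a + (a - 1) * d, ?_⟩
    rw [pow_succ, ← mul_assoc, hm, hrec]
    push_cast
    field_simp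
    ring

theorem limsupDeviation_mem_specL (ha : 2 ≤ a) (w : BinaryWord) :
    limsupDeviation (1 / a) w ∈ specL a := by
  refine ⟨value (1 / a) w, congrArg (limsup · atTop) (funext fun n ↦ ?_)⟩
  obtain ⟨m, hm⟩ := exists_value_mul_pow_eq_add_intCast ha w n
  obtain ⟨d, hd⟩ := digit_eq_intCast (shift n w 0)
  have hdev : deviation (1 / a) (shift n w) =
      |value (1 / a) w * a ^ n - ((m + d : ℤ) : ℝ)| := by
    rw [deviation, hm, hd]
    push_cast
    ring_nf
  rw [hdev]
  refine distNearestInt_eq_abs_sub (hdev ▸ ?_)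
  exact (deviation_le (one_div_natCast_mem_Ioo ha) _).trans (one_div_natCast_mem_Ioc ha).2

theorem fract_eq_add_digit {x : ℝ} (hx : |x| < 1) : Int.fract x = x + digit (decide (x < 0)) := by
  obtain ⟨hlower, hupper⟩ := abs_lt.1 hx
  by_cases hneg : x < 0
  · rw [decide_eq_true hneg, digit_true]
    exact Int.fract_eq_iff.2 ⟨by linarith, by linarith, -1, by simp⟩
  · simpa [hneg] using Int.fract_eq_self.2 ⟨not_lt.1 hneg, hupper⟩

theorem deviation_shift_sign_eq_distNearestInt (ha : 2 ≤ a) {y : ℕ → ℝ}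
    (hy : ∀ n, y (n + 1) = y n * a) (hdist : ∀ n, distNearestInt (y n) < 1 / a) (n : ℕ) :
    deviation (1 / a) (shift n fun n ↦ decide (y n - round (y n) < 0)) = distNearestInt (y n) := by
  have ha0 : (0 : ℝ) < a := by positivity
  set x : ℕ → ℝ := fun n ↦ y n - round (y n) with hx
  set w : BinaryWord := fun n ↦ decide (x n < 0)
  have hX := one_div_natCast_mem_Ioo ha
  have hx_lt (n : ℕ) : |x n| < 1 := (hdist n).trans hX.2
  have hax_lt (n : ℕ) : |a * x n| < 1 := by
    rw [abs_mul, Nat.abs_cast]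
    exact (lt_div_iff₀' ha0).1 (hdist n)
  have hcarry (n : ℕ) : a * x n + digit (w n) = x (n + 1) + digit (w (n + 1)) := by
    have hsign : decide (a * x n < 0) = w n := by simp [w, mul_neg_iff, ha0, ha0.not_gt]
    rw [← hsign, ← fract_eq_add_digit (hax_lt n), ← fract_eq_add_digit (hx_lt (n + 1))]
    refine Int.fract_eq_fract.2 ⟨round (y (n + 1)) - a * round (y n), ?_⟩
    simp only [hx, hy]
    push_cast
    ring
  have hvalue : x n + digit (w n) = value (1 / a) (shift n w) := by
    refine eq_value_shift_of_recursion_of_bounded hX (z := fun n ↦ x n + digit (w n)) (C := 2)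
      (fun n ↦ ?_) (fun n ↦ ?_) n
    · rw [← hcarry]
      field_simp
      ring
    · have hdigit := digit_mem_Icc (w n)
      obtain ⟨hlower, hupper⟩ := abs_lt.1 (hx_lt n)
      exact abs_le.2 ⟨by linarith [hdigit.1], by linarith [hdigit.2]⟩
  rw [deviation, ← hvalue, shift_apply, add_zero, add_sub_cancel_right]
  rfl

theorem exists_limsupDeviation_eq_of_mem_specL (ha : 2 ≤ a) {L : ℝ} (hL : L ∈ specL a)
    (hlt : L < 1 / a) : ∃ w, limsupDeviation (1 / a) w = L := by
  obtain ⟨ξ, rfl⟩ := hL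
  have hbdd : IsBoundedUnder (· ≤ ·) atTop fun n : ℕ ↦ distNearestInt (ξ * (a : ℝ) ^ n) :=
    isBoundedUnder_of ⟨1 / 2, fun _ ↦ abs_sub_round _⟩
  obtain ⟨N, hN⟩ := eventually_atTop.1 (eventually_lt_of_limsup_lt hlt hbdd)
  refine ⟨fun n ↦ decide (ξ * (a : ℝ) ^ (n + N) - round (ξ * (a : ℝ) ^ (n + N)) < 0), ?_⟩
  rw [limsupDist, ← limsup_nat_add _ N, limsupDeviation]
  exact congrArg (limsup · atTop) (funext (deviation_shift_sign_eq_distNearestInt ha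
    (fun n ↦ by ring) fun n ↦ hN _ le_add_self))

end Integer

end BinaryWord

open BinaryWord

theorem stmt3 (a : ℕ) (ha : 2 ≤ a) :
    specL a ∩ Set.Ioc 0 ((1 / (a : ℝ)) * Efun (1 / (a : ℝ))) =
      {x : ℝ | ∃ k : ℕ, x = (1 / (a : ℝ)) * Ek k (1 / (a : ℝ))} ∪
        {(1 / (a : ℝ)) * Efun (1 / (a : ℝ))} := by
  have hX := one_div_natCast_mem_Ioo ha
  ext L
  constructor
  · rintro ⟨hL, hpos, hle⟩
    obtain rfl | hlt := hle.eq_or_lt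
    · exact .inr rfl
    · have hlt_one_div := hlt.trans_le (mul_Efun_le hX)
      obtain ⟨w, rfl⟩ := exists_limsupDeviation_eq_of_mem_specL ha hL hlt_one_div
      exact .inl (exists_limsupDeviation_eq_mul_Ek (one_div_natCast_mem_Ioc ha) hpos hlt)
  · rintro (⟨k, rfl⟩ | rfl)
    · refine ⟨?_, mul_Ek_pos k hX, mul_Ek_le_mul_Efun k hX⟩
      exact limsupDeviation_iterate_morse k hX ▸ limsupDeviation_mem_specL ha _
    · refine ⟨?_, (mul_Ek_pos 0 hX).trans_le (mul_Ek_le_mul_Efun 0 hX), le_rfl⟩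
      exact limsupDeviation_thueMorse hX ▸ limsupDeviation_mem_specL ha _
end

section
/- Let b ≥ 4 be an integer and α = (b+√(b²−4))/2, so that α > 3 is a quadratic unit with conjugate α₂ = 1/α > 0. Define integer sequences (p_n) and (q_n) by p₀ = 0, p₂ = 1, p_{2n+2} = b·p_{2n} − p_{2n−2}, p_{2n−1} = p_{2n−2} + p_{2n}, and q₀ = 1, q₂ = 1+b, q_{2n+2} = b·q_{2n} − q_{2n−2}, q_{2n−1} = q_{2n−2} + q_{2n} for n ≥ 1. Then the sequence (p_n/q_n)_{n≥0} is strictly increasing and converges to 1/(1+α), and 𝓛(α) ∩ [0, 1/(1+α)] = { p_n/q_n : n = 0, 1, 2, … } ∪ { 1/(1+α) }. Moreover the set X_∞ = { ξ ∈ ℝ : limsup_{n→∞} ‖ξ·α^n‖ = 1/(1+α) } is uncountable. -/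
/-!
Write `ε n` for the signed distance of `ξ α ^ n` to the nearest integer. Since `α` is a root of
`x ^ 2 - b x + 1`, the combination `ε (n + 1) - b ε n + ε (n - 1)` is an integer, and a limit of
shifts of `ε` along which `|ε|` attains its limsup is a bi-infinite solution of the same recurrence.
If the limsup is less than `1 / (1 + α)`, the integers involved are the differences of a
bi-infinite word `t` in the letters `0`, `1`, and the solution is `α / (1 + α)` times the difference
between the two half-infinite words of `t` at a cut, read as expansions in base `α`.

The bound forces Markoff's reflection condition on `t`, hence `t` is balanced. At a cut where the
difference is maximal, the two halves are therefore the extreme values among all the halves of `t`.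
The gap between the halves with leading digit `0` and those with leading digit `1` is transported
along the word, and comparing it with the extreme values determines the maximal difference.

Conversely, the word with a one at every multiple of `n + 1` realizes `p n / q n`, and the words
with infinitely many ones at growing distances, of which there are uncountably many, all realize
`1 / (1 + α)`.
-/

/-- A sequence of letters `0` and `1`; letters are integers so that they can be added up. -/
def IsBinary {ι : Type*} (u : ι → ℤ) : Prop := ∀ k, u k = 0 ∨ u k = 1

/-- The number `0.u₀u₁u₂…` written in base `a`. -/
noncomputable def radixValue (a : ℝ) (u : ℕ → ℤ) : ℝ := ∑' k, (u k : ℝ) / a ^ (k + 1)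

/-- The value in base `a` of the word `t` read to the right, starting just after position `n`. -/
noncomputable def futureValue (a : ℝ) (t : ℤ → ℤ) (n : ℤ) : ℝ :=
  radixValue a fun k => t (n + 1 + k)

/-- The value in base `a` of the word `t` read to the left, starting at position `n`. -/
noncomputable def pastValue (a : ℝ) (t : ℤ → ℤ) (n : ℤ) : ℝ :=
  radixValue a fun k => t (n - k)

/-- The asymmetry of the word `t` about the cut between positions `n` and `n + 1`. -/
noncomputable def skew (a : ℝ) (t : ℤ → ℤ) (n : ℤ) : ℝ :=
  futureValue a t n - pastValue a t n

/-- The values in base `a` of all the right and left infinite halves of `t`. -/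
def halfValues (a : ℝ) (t : ℤ → ℤ) : Set ℝ :=
  Set.range (futureValue a t) ∪ Set.range (pastValue a t)

section Radix

variable {a : ℝ} {u v : ℕ → ℤ}

theorem IsBinary.cast_nonneg {ι : Type*} {u : ι → ℤ} (hu : IsBinary u) (k : ι) :
    (0 : ℝ) ≤ u k := by
  rcases hu k with h | h <;> simp [h]

theorem IsBinary.cast_le_one {ι : Type*} {u : ι → ℤ} (hu : IsBinary u) (k : ι) :
    (u k : ℝ) ≤ 1 := by
  rcases hu k with h | h <;> simp [h]

theorem hasSum_inv_pow_succ (ha : 1 < a) : HasSum (fun k : ℕ => 1 / a ^ (k + 1)) (1 / (a - 1)) := by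
  have hsum := (hasSum_geometric_of_lt_one (r := a⁻¹) (by positivity)
    (inv_lt_one_of_one_lt₀ ha)).mul_left a⁻¹
  have hne : a - 1 ≠ 0 := by linarith
  have hterm (k : ℕ) : 1 / a ^ (k + 1) = a⁻¹ * a⁻¹ ^ k := by rw [one_div, ← inv_pow, pow_succ']
  have hlimit : 1 / (a - 1) = a⁻¹ * (1 - a⁻¹)⁻¹ := by field_simp
  simpa only [hterm, hlimit] using hsum

theorem summable_radix (ha : 1 < a) (hu : IsBinary u) :
    Summable fun k => (u k : ℝ) / a ^ (k + 1) := by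
  refine (hasSum_inv_pow_succ ha).summable.of_nonneg_of_le
    (fun k => div_nonneg (hu.cast_nonneg k) (by positivity)) fun k => ?_
  gcongr
  exact hu.cast_le_one k

theorem mul_radixValue (ha : 1 < a) (hu : IsBinary u) :
    a * radixValue a u = u 0 + radixValue a fun k => u (k + 1) := by
  have ha0 : a ≠ 0 := by positivity
  rw [radixValue, (summable_radix ha hu).tsum_eq_zero_add, mul_add, ← tsum_mul_left, radixValue]
  congr 1
  · rw [zero_add, pow_one, mul_div_cancel₀ _ ha0]
  · refine tsum_congr fun k => ?_
    field_simp
    ring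

theorem radixValue_nonneg (ha : 0 ≤ a) (hu : IsBinary u) : 0 ≤ radixValue a u :=
  tsum_nonneg fun k => div_nonneg (hu.cast_nonneg k) (by positivity)

theorem radixValue_le (ha : 1 < a) (hu : IsBinary u) : radixValue a u ≤ 1 / (a - 1) := by
  rw [← (hasSum_inv_pow_succ ha).tsum_eq]
  refine (summable_radix ha hu).tsum_le_tsum (fun k => ?_) (hasSum_inv_pow_succ ha).summable
  gcongr
  exact hu.cast_le_one k

theorem radixValue_lt_one (ha : 2 < a) (hu : IsBinary u) : radixValue a u < 1 :=
  (radixValue_le (by linarith) hu).trans_lt <| by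
    rw [div_lt_one (by linarith)]
    linarith

theorem pow_mul_sub_eq_of_agree {F G : ℕ → ℝ}
    (hF : ∀ k, a * F k = u k + F (k + 1)) (hG : ∀ k, a * G k = v k + G (k + 1)) {c : ℕ}
    (huv : ∀ r < c, u r = v r) : a ^ c * (F 0 - G 0) = F c - G c := by
  induction c with
  | zero => simp
  | succ c ih =>
    have hFc := hF c
    rw [huv c c.lt_succ_self] at hFc
    linear_combination a * ih (fun r hr => huv r (hr.trans c.lt_succ_self)) + hFc - hG c

theorem mul_radixValue_drop (ha : 1 < a) (hu : IsBinary u) (k : ℕ) :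
    a * radixValue a (fun r => u (r + k)) = u k + radixValue a fun r => u (r + (k + 1)) := by
  rw [mul_radixValue ha fun r => hu (r + k), zero_add]
  simp only [add_right_comm, add_assoc]

theorem eq_radixValue_of_bounded (ha : 1 < a) (hu : IsBinary u) {F : ℕ → ℝ} {C : ℝ}
    (hF : ∀ k, a * F k = u k + F (k + 1)) (hFC : ∀ k, |F k| ≤ C) : F 0 = radixValue a u := by
  let G : ℕ → ℝ := fun k => radixValue a fun r => u (r + k)
  have hFG (k : ℕ) : a ^ k * |F 0 - G 0| ≤ C + 1 / (a - 1) := by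
    have hGk : |G k| ≤ 1 / (a - 1) := by
      rw [abs_of_nonneg (radixValue_nonneg (by positivity) fun r => hu (r + k))]
      exact radixValue_le ha fun r => hu (r + k)
    have hscale : a ^ k * (F 0 - G 0) = F k - G k :=
      pow_mul_sub_eq_of_agree hF (mul_radixValue_drop ha hu) fun _ _ => rfl
    calc a ^ k * |F 0 - G 0| = |F k - G k| := by
          rw [← hscale, abs_mul, abs_of_pos (by positivity : 0 < a ^ k)]
      _ ≤ C + 1 / (a - 1) := (abs_sub _ _).trans (add_le_add (hFC k) hGk)
  by_contra hne
  have hpos : 0 < |F 0 - G 0| := abs_pos.2 (sub_ne_zero.2 hne)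
  obtain ⟨k, hk⟩ := pow_unbounded_of_one_lt ((C + 1 / (a - 1)) / |F 0 - G 0|) ha
  exact ((div_lt_iff₀ hpos).1 hk).not_ge (hFG k)

theorem radixValue_lt_of_first_difference (ha : 2 < a) (hu : IsBinary u) (hv : IsBinary v) {c : ℕ}
    (huc : u c = 0) (hvc : v c = 1) (huv : ∀ r < c, u r = v r) :
    radixValue a u < radixValue a v := by
  have ha1 : 1 < a := by linarith
  have hagree := pow_mul_sub_eq_of_agree (mul_radixValue_drop ha1 hu) (mul_radixValue_drop ha1 hv)
    huv
  have hstep_u := mul_radixValue_drop ha1 hu c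
  have hstep_v := mul_radixValue_drop ha1 hv c
  have htail_u := radixValue_lt_one ha fun r => hu (r + (c + 1))
  have htail_v := radixValue_nonneg (a := a) (by positivity) fun r => hv (r + (c + 1))
  simp only [huc, hvc, Int.cast_zero, Int.cast_one, add_zero] at hagree hstep_u hstep_v
  have hpow : 0 < a ^ (c + 1) := by positivity
  have : a ^ (c + 1) * (radixValue a v - radixValue a u) =
      1 + radixValue a (fun r => v (r + (c + 1))) - radixValue a fun r => u (r + (c + 1)) := by
    linear_combination hstep_v - hstep_u - a * hagree
  nlinarith

theorem exists_first_ne (huv : u ≠ v) : ∃ c, u c ≠ v c ∧ ∀ r < c, u r = v r := by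
  classical
  have hex : ∃ c, u c ≠ v c := Function.ne_iff.1 huv
  exact ⟨Nat.find hex, Nat.find_spec hex, fun r hr => not_not.1 (Nat.find_min hex hr)⟩

theorem exists_first_difference_of_radixValue_lt (ha : 2 < a) (hu : IsBinary u) (hv : IsBinary v)
    (huv : radixValue a u < radixValue a v) :
    ∃ c, u c = 0 ∧ v c = 1 ∧ ∀ r < c, u r = v r := by
  obtain ⟨c, hne, hagree⟩ := exists_first_ne (u := u) (v := v) (by rintro rfl; exact huv.false)
  rcases hu c with huc | huc <;> rcases hv c with hvc | hvc
  · exact absurd (huc.trans hvc.symm) hne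
  · exact ⟨c, huc, hvc, hagree⟩
  · have := radixValue_lt_of_first_difference ha hv hu hvc huc fun r hr => (hagree r hr).symm
    exact absurd huv this.not_gt
  · exact absurd (huc.trans hvc.symm) hne

theorem radixValue_injOn (ha : 2 < a) : Set.InjOn (radixValue a) {u | IsBinary u} := by
  intro u hu v hv huv
  by_contra hne
  obtain ⟨c, hc, hagree⟩ := exists_first_ne hne
  rcases hu c with huc | huc <;> rcases hv c with hvc | hvc
  · exact hc (huc.trans hvc.symm)
  · exact (radixValue_lt_of_first_difference ha hu hv huc hvc hagree).ne huv
  · exact (radixValue_lt_of_first_difference ha hv hu hvc huc fun r hr =>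
      (hagree r hr).symm).ne huv.symm
  · exact hc (huc.trans hvc.symm)

theorem pow_mul_radixValue_le_one (ha : 2 < a) (hu : IsBinary u) {L : ℕ}
    (hzero : ∀ r < L, u r = 0) : a ^ L * radixValue a u ≤ 1 := by
  have hagree := pow_mul_sub_eq_of_agree (v := 0) (G := 0)
    (mul_radixValue_drop (by linarith) hu) (by simp) hzero
  simp only [Pi.zero_apply, sub_zero, add_zero] at hagree
  exact hagree ▸ (radixValue_lt_one ha fun r => hu (r + L)).le

end Radix

section BiInfinite

variable {a : ℝ} {t : ℤ → ℤ}

theorem mul_futureValue (ha : 1 < a) (ht : IsBinary t) (n : ℤ) :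
    a * futureValue a t n = t (n + 1) + futureValue a t (n + 1) := by
  rw [futureValue, mul_radixValue ha fun k => ht _, futureValue]
  simp only [Nat.cast_zero, add_zero, Nat.cast_succ, add_assoc, add_comm (1 : ℤ)]

theorem mul_pastValue (ha : 1 < a) (ht : IsBinary t) (n : ℤ) :
    a * pastValue a t n = t n + pastValue a t (n - 1) := by
  rw [pastValue, mul_radixValue ha fun k => ht _, pastValue]
  simp only [Nat.cast_zero, sub_zero, Nat.cast_succ, sub_sub, add_comm (1 : ℤ)]

theorem mul_futureValue_add (ha : 1 < a) (ht : IsBinary t) (n : ℤ) (k : ℕ) :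
    a * futureValue a t (n + k) = t (n + 1 + k) + futureValue a t (n + (k + 1 : ℕ)) := by
  rw [mul_futureValue ha ht, add_right_comm n, Nat.cast_succ, add_assoc n, add_comm 1]

theorem mul_pastValue_sub (ha : 1 < a) (ht : IsBinary t) (n : ℤ) (k : ℕ) :
    a * pastValue a t (n - k) = t (n - k) + pastValue a t (n - (k + 1 : ℕ)) := by
  rw [mul_pastValue ha ht, sub_sub, Nat.cast_succ]

theorem futureValue_mem_Ico (ha : 2 < a) (ht : IsBinary t) (n : ℤ) :
    futureValue a t n ∈ Set.Ico 0 1 :=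
  ⟨radixValue_nonneg (by linarith) fun _ => ht _, radixValue_lt_one ha fun _ => ht _⟩

theorem pastValue_mem_Ico (ha : 2 < a) (ht : IsBinary t) (n : ℤ) :
    pastValue a t n ∈ Set.Ico 0 1 :=
  ⟨radixValue_nonneg (by linarith) fun _ => ht _, radixValue_lt_one ha fun _ => ht _⟩

theorem abs_skew_le (ha : 1 < a) (ht : IsBinary t) (n : ℤ) : |skew a t n| ≤ 1 / (a - 1) :=
  abs_sub_le_of_nonneg_of_le
    (radixValue_nonneg (by linarith) fun _ => ht _) (radixValue_le ha fun _ => ht _)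
    (radixValue_nonneg (by linarith) fun _ => ht _) (radixValue_le ha fun _ => ht _)

theorem skew_recurrence {b : ℝ} (ha : 1 < a) (hab : a ^ 2 + 1 = b * a) (ht : IsBinary t) (n : ℤ) :
    a * (skew a t (n + 1) + skew a t (n - 1)) =
      b * (a * skew a t n) - (1 + a) * (t (n + 1) - t n) := by
  have hfuture := mul_futureValue ha ht n
  have hpast := mul_pastValue ha ht n
  have hfuture_prev := mul_futureValue ha ht (n - 1)
  have hpast_next := mul_pastValue ha ht (n + 1)
  rw [sub_add_cancel] at hfuture_prev
  rw [add_sub_cancel_right] at hpast_next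
  unfold skew
  linear_combination -a * hfuture + a * hpast + hfuture_prev - hpast_next +
    (futureValue a t n - pastValue a t n) * hab

end BiInfinite

/-- `H` is a summatory function of `t`: the sum of the letters of `t` at the positions
`i + 1, …, i + n` is `H (i + n) - H i`. -/
def IsHeight (H t : ℤ → ℤ) : Prop := ∀ k, H (k + 1) = H k + t (k + 1)

/-- For the word with height `H`, the sums over any two blocks of length `m` differ by at most
one. -/
def BalancedAt (H : ℤ → ℤ) (m : ℤ) : Prop := ∀ i j, H (j + m) - H j ≤ H (i + m) - H i + 1

/-- Markoff's condition: whenever two adjacent letters differ, say as `x y`, the word reads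
`y wᵒᵖ x y w x` around them, where `wᵒᵖ` is the reversal of some finite word `w`. -/
def IsMarkoff (t : ℤ → ℤ) : Prop :=
  ∀ j, t j ≠ t (j + 1) → ∃ r, 1 ≤ r ∧ t (j + 1 + r) = t j ∧ t (j - r) = t (j + 1) ∧
    ∀ i, 1 ≤ i → i < r → t (j + 1 + i) = t (j - i)

/-- A pair of blocks of length `n`, starting after `i` and after `j`, witnessing that the binary
word `t` with height `H` is not balanced, with `n` and then `j - i` as small as possible. -/
structure MinimalImbalance (t H : ℤ → ℤ) (n i j : ℤ) : Prop where
  isBinary : IsBinary t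
  isHeight : IsHeight H t
  length_pos : 1 ≤ n
  lt : i < j
  excess : H (i + n) - H i + 2 ≤ H (j + n) - H j
  shorter : ∀ m, 0 ≤ m → m < n → BalancedAt H m
  closer : ∀ i' j', (j' - i').natAbs < (j - i).natAbs → H (j' + n) - H j' ≤ H (i' + n) - H i' + 1

section Height

variable {H H' t t' : ℤ → ℤ}

theorem exists_isHeight (t : ℤ → ℤ) : ∃ H, IsHeight H t := by
  refine ⟨fun k => ∑ r ∈ Finset.range k.toNat, t (r + 1) -
    ∑ r ∈ Finset.range (-k).toNat, t (-r), fun k => ?_⟩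
  beta_reduce
  rcases le_or_gt 0 k with hk | hk
  · rw [show (-(k + 1)).toNat = 0 by omega, show (-k).toNat = 0 by omega,
      show (k + 1).toNat = k.toNat + 1 by omega, Finset.sum_range_succ, Int.toNat_of_nonneg hk]
    simp
  · rw [show (k + 1).toNat = 0 by omega, show k.toNat = 0 by omega,
      show (-k).toNat = (-(k + 1)).toNat + 1 by omega, Finset.sum_range_succ,
      Int.toNat_of_nonneg (by omega : 0 ≤ -(k + 1)), neg_neg]
    ring

theorem IsHeight.shift (hH : IsHeight H t) (c : ℤ) :
    IsHeight (fun k => H (c + k)) fun k => t (c + k) := fun k => by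
  simpa only [add_assoc] using hH (c + k)

theorem IsHeight.reflect (hH : IsHeight H t) (c : ℤ) :
    IsHeight (fun k => -H (c - k)) fun k => t (c + 1 - k) := fun k => by
  have := hH (c - (k + 1))
  grind

theorem IsHeight.sub_eq_sub (hH : IsHeight H t) (hH' : IsHeight H' t') {c : ℤ} (hc : 0 ≤ c)
    (h : ∀ r, 1 ≤ r → r ≤ c → t r = t' r) : H c - H 0 = H' c - H' 0 := by
  induction c, hc using Int.leInduction with
  | base => simp
  | succ c hc ih =>
    have hprev := ih fun r h1 hr => h r h1 (by omega)
    have hlast := h (c + 1) (by omega) le_rfl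
    have := hH c
    have := hH' c
    omega

end Height

namespace MinimalImbalance

variable {t H : ℤ → ℤ} {n i j : ℤ}

theorem first_letters (h : MinimalImbalance t H n i j) : t (i + 1) = 0 ∧ t (j + 1) = 1 := by
  have := h.shorter (n - 1) (by linarith [h.length_pos]) (by omega) (i + 1) (j + 1)
  have := h.isHeight i
  have := h.isHeight j
  have := h.isBinary (i + 1)
  have := h.isBinary (j + 1)
  have := h.excess
  grind

theorem last_letters (h : MinimalImbalance t H n i j) : t (i + n) = 0 ∧ t (j + n) = 1 := by
  have := h.shorter (n - 1) (by linarith [h.length_pos]) (by omega) i j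
  have := h.isHeight (i + (n - 1))
  have := h.isHeight (j + (n - 1))
  have := h.isBinary (i + n)
  have := h.isBinary (j + n)
  have := h.excess
  grind

theorem excess_eq (h : MinimalImbalance t H n i j) : H (j + n) - H j = H (i + n) - H i + 2 := by
  have := h.shorter (n - 1) (by linarith [h.length_pos]) (by omega) (i + 1) (j + 1)
  have := h.isHeight i
  have := h.isHeight j
  have := h.first_letters
  have := h.excess
  grind

theorem two_le_length (h : MinimalImbalance t H n i j) : 2 ≤ n := by
  by_contra hn
  obtain rfl : n = 1 := by linarith [h.length_pos]
  have := h.isHeight i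
  have := h.isHeight j
  have := h.first_letters
  have := h.excess
  grind

theorem prefix_excess (h : MinimalImbalance t H n i j) {r : ℤ} (hr : 1 ≤ r) (hrn : r < n) :
    H (j + r) - H j = H (i + r) - H i + 1 := by
  have := h.shorter r (by omega) hrn i j
  have := h.shorter (n - r) (by omega) (by omega) (i + r) (j + r)
  have := h.excess
  grind

theorem middle_excess (h : MinimalImbalance t H n i j) {k : ℤ} (hik : i < k) (hkj : k < j) :
    H (k + n) - H k = H (i + n) - H i + 1 := by
  have := h.closer i k (by omega)
  have := h.closer k j (by omega)
  have := h.excess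
  omega

theorem length_le (h : MinimalImbalance t H n i j) : n ≤ j - i := by
  by_contra hlt
  have := h.shorter (j - i) (by linarith [h.lt]) (by omega) i (i + n)
  have := h.excess
  grind

theorem letter_add_length (h : MinimalImbalance t H n i j) {k : ℤ} (hik : i + 2 ≤ k)
    (hkj : k < j) : t (k + n) = t k := by
  have := h.middle_excess (k := k) (by omega) hkj
  have := h.middle_excess (k := k - 1) (by omega) (by omega)
  have := h.isHeight (k - 1)
  have := h.isHeight (k - 1 + n)
  grind

theorem right_letter (h : MinimalImbalance t H n i j) : t j = 0 := by
  have := h.middle_excess (k := j - 1) (by linarith [h.length_le, h.two_le_length]) (by omega)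
  have := h.isHeight (j - 1)
  have := h.isHeight (j - 1 + n)
  have := h.last_letters
  have := h.excess_eq
  grind

theorem mirror_sum (h : MinimalImbalance t H n i j) {r : ℤ}
    (hmirror : ∀ k, 1 ≤ k → k ≤ r → t (j + 1 + k) = t (j - k)) (hr : 0 ≤ r) :
    H (j + 1 + r) - H (j + 1) = H (j - 1) - H (j - 1 - r) := by
  have := (h.isHeight.shift (j + 1)).sub_eq_sub (h.isHeight.reflect (j - 1)) hr
    (by simpa only [sub_add_cancel] using hmirror)
  simp only [add_zero, sub_zero] at this
  omega

theorem false_of_mirror_reaches_left (h : MinimalImbalance t H n i j)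
    (hmirror : ∀ k, 1 ≤ k → k < j - i → t (j + 1 + k) = t (j - k)) : False := by
  have := h.two_le_length
  rcases h.length_le.eq_or_lt with heq | hlt
  · have := hmirror (n - 1) (by omega) (by omega)
    have := h.first_letters
    have := h.last_letters
    grind
  · have := h.closer (2 * j - i - n) j (by omega)
    have := h.mirror_sum (r := j - 1 - i) (fun k h1 hk => hmirror k h1 (by omega)) (by omega)
    have := h.mirror_sum (r := j - 1 - i - n) (fun k h1 hk => hmirror k h1 (by omega)) (by omega)
    have := h.excess
    grind

theorem false_of_length_le_mirror (h : MinimalImbalance t H n i j) {r : ℤ} (hnr : n ≤ r)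
    (hrij : r < j - i) (hright : t (j + 1 + r) = 0) (hleft : t (j - r) = 1)
    (hmirror : ∀ k, 1 ≤ k → k < r → t (j + 1 + k) = t (j - k)) : False := by
  have := h.two_le_length
  have : j - r ≠ i + 1 := by
    have := h.first_letters
    grind
  have := h.closer (j + 1 + r - n) j (by omega)
  have := h.mirror_sum (r := r - 1) (fun k h1 hk => hmirror k h1 (by omega)) (by omega)
  have := h.mirror_sum (r := r - n) (fun k h1 hk => hmirror k h1 (by omega)) (by omega)
  have := h.middle_excess (k := j - r - 1) (by omega) (by omega)
  have := h.isHeight (j + r)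
  have := h.isHeight (j - r - 1)
  have := h.excess_eq
  grind

theorem false_of_mirror_lt_length (h : MinimalImbalance t H n i j) {r : ℤ} (hr : 1 ≤ r)
    (hrn : r < n) (hright : t (j + 1 + r) = 0) (hleft : t (j - r) = 1)
    (hmirror : ∀ k, 1 ≤ k → k < r → t (j + 1 + k) = t (j - k)) : False := by
  have := h.length_le
  have := h.first_letters
  have := h.last_letters
  have : j - r ≠ i + 1 := by grind
  have : r ≠ n - 1 := by grind
  have hperiod : H (j - 1 + n) - H (j - 1 + n - r) = H (j - 1) - H (j - 1 - r) := by
    have := (h.isHeight.reflect (j - 1 + n)).sub_eq_sub (h.isHeight.reflect (j - 1)) (c := r)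
      (by omega) fun k h1 hk => by
        have := h.letter_add_length (k := j - k) (by omega) (by omega)
        grind
    simp only [sub_zero] at this
    omega
  have := h.prefix_excess (r := r + 1) (by omega) (by omega)
  have := h.shorter (r + 1) (by omega) (by omega) i (j - 1 - r + n)
  have := h.mirror_sum (r := r - 1) (fun k h1 hk => hmirror k h1 (by omega)) (by omega)
  have := h.isHeight (j - r - 1)
  have := h.isHeight (j + n - 1)
  have := h.isHeight (j + r)
  have := h.isHeight j
  have := h.isHeight (j - 1)
  have := h.right_letter
  grind

theorem not_isMarkoff (h : MinimalImbalance t H n i j) : ¬ IsMarkoff t := fun hM => by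
  have hj := h.right_letter
  have hj1 := h.first_letters.2
  obtain ⟨r, hr, hright, hleft, hmirror⟩ := hM j (by omega)
  rw [hj] at hright
  rw [hj1] at hleft
  rcases le_or_gt (j - i) r with hfar | hnear
  · exact h.false_of_mirror_reaches_left fun k h1 hk => hmirror k h1 (by omega)
  rcases le_or_gt n r with hlong | hshort
  · exact h.false_of_length_le_mirror hlong hnear hright hleft hmirror
  · exact h.false_of_mirror_lt_length hr hshort hright hleft hmirror

end MinimalImbalance

section Balanced

variable {t H : ℤ → ℤ}

theorem IsBinary.complement (ht : IsBinary t) : IsBinary fun k => 1 - t k := fun k => by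
  rcases ht k with h | h <;> simp [h]

theorem IsHeight.complement (hH : IsHeight H t) :
    IsHeight (fun k => k - H k) fun k => 1 - t k := fun k => by
  have := hH k
  grind

theorem IsMarkoff.complement (hM : IsMarkoff t) : IsMarkoff fun k => 1 - t k := by
  simpa only [IsMarkoff, ne_eq, sub_right_inj] using hM

theorem exists_minimalImbalance (ht : IsBinary t) (hH : IsHeight H t) {n : ℕ}
    (hshorter : ∀ m < n, BalancedAt H m) (hn : ¬ BalancedAt H n) :
    ∃ i j, MinimalImbalance t H n i j ∨
      MinimalImbalance (fun k => 1 - t k) (fun k => k - H k) n j i := by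
  classical
  have hex : ∃ d : ℕ, ∃ i j : ℤ, (j - i).natAbs = d ∧ H (i + n) - H i + 2 ≤ H (j + n) - H j := by
    simp only [BalancedAt, not_forall, not_le] at hn
    obtain ⟨i, j, hij⟩ := hn
    exact ⟨_, i, j, rfl, by omega⟩
  obtain ⟨i, j, hd, hexcess⟩ := Nat.find_spec hex
  have hcloser (i' j' : ℤ) (hlt : (j' - i').natAbs < (j - i).natAbs) :
      H (j' + n) - H j' ≤ H (i' + n) - H i' + 1 := by
    by_contra hcon
    exact Nat.find_min hex (m := (j' - i').natAbs) (by omega) ⟨i', j', rfl, by omega⟩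
  have hpos : (1 : ℤ) ≤ n := by
    rcases n.eq_zero_or_pos with rfl | hpos
    · simp at hexcess
    · exact_mod_cast hpos
  have hshort (m : ℤ) (h0 : 0 ≤ m) (hm : m < n) : BalancedAt H m := by
    lift m to ℕ using h0
    exact hshorter m (by exact_mod_cast hm)
  refine ⟨i, j, ?_⟩
  rcases lt_trichotomy i j with hij | rfl | hij
  · exact .inl ⟨ht, hH, hpos, hij, hexcess, hshort, hcloser⟩
  · omega
  · refine .inr ⟨ht.complement, hH.complement, hpos, hij, by omega, fun m h0 hm i' j' => ?_,
      fun i' j' hlt => ?_⟩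
    · have := hshort m h0 hm j' i'
      omega
    · have := hcloser j' i' (by omega)
      omega

theorem IsMarkoff.balancedAt (hM : IsMarkoff t) (ht : IsBinary t) (hH : IsHeight H t) (n : ℕ) :
    BalancedAt H n := by
  induction n using Nat.strong_induction_on with
  | _ n hshorter =>
    by_contra hn
    obtain ⟨i, j, himbalance | himbalance⟩ := exists_minimalImbalance ht hH hshorter hn
    · exact himbalance.not_isMarkoff hM
    · exact himbalance.not_isMarkoff hM.complement

end Balanced

section SmallSkew

variable {a : ℝ} {t : ℤ → ℤ}

theorem isMarkoff_of_abs_skew_lt (ha : 2 < a) (ht : IsBinary t)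
    (hsmall : ∀ n, a * |skew a t n| < 1) : IsMarkoff t := by
  intro j hj
  have ha1 : 1 < a := by linarith
  have hfuture := mul_futureValue ha1 ht j
  have hpast := mul_pastValue ha1 ht j
  have hskew : |futureValue a t j * a - pastValue a t j * a| < 1 := by
    rw [← sub_mul, abs_mul, abs_of_pos (by linarith : 0 < a), mul_comm]
    exact hsmall j
  rw [abs_lt] at hskew
  rcases ht j with hj0 | hj0 <;> rcases ht (j + 1) with hj1 | hj1 <;>
    simp only [hj0, hj1, Int.cast_zero, Int.cast_one] at hfuture hpast
  · omega
  · have hlt : futureValue a t (j + 1) < pastValue a t (j - 1) := by linarith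
    obtain ⟨c, h0, h1, hagree⟩ := exists_first_difference_of_radixValue_lt ha
      (fun _ => ht _) (fun _ => ht _) hlt
    refine ⟨c + 1, by omega, by grind, by grind, fun i hi hic => ?_⟩
    have := hagree (i - 1).toNat (by omega)
    grind
  · have hlt : pastValue a t (j - 1) < futureValue a t (j + 1) := by linarith
    obtain ⟨c, h0, h1, hagree⟩ := exists_first_difference_of_radixValue_lt ha
      (fun _ => ht _) (fun _ => ht _) hlt
    refine ⟨c + 1, by omega, by grind, by grind, fun i hi hic => ?_⟩
    have := hagree (i - 1).toNat (by omega)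
    grind
  · omega

theorem exists_block_sum_eq_add_two {t' H H' : ℤ → ℤ} (ha : 2 < a) (ht : IsBinary t)
    (ht' : IsBinary t') (hH : IsHeight H t) (hH' : IsHeight H' t')
    (hfuture : futureValue a t 0 < futureValue a t' 0)
    (hpast : pastValue a t 0 < pastValue a t' 0) :
    ∃ c d : ℕ, H' (c + 1) - H' (-d - 1) = H (c + 1) - H (-d - 1) + 2 := by
  obtain ⟨c, hc, hc', hright⟩ := exists_first_difference_of_radixValue_lt ha
    (fun _ => ht _) (fun _ => ht' _) hfuture
  obtain ⟨d, hd, hd', hleft⟩ := exists_first_difference_of_radixValue_lt ha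
    (fun _ => ht _) (fun _ => ht' _) hpast
  have := hH.sub_eq_sub hH' c.cast_nonneg fun r h1 hr => by
    have := hright (r - 1).toNat (by omega)
    grind
  have := (hH.reflect 0).sub_eq_sub (hH'.reflect 0) d.cast_nonneg fun r h1 hr => by
    have := hleft (r - 1).toNat (by omega)
    grind
  have := hH c
  have := hH' c
  have := hH (-d - 1)
  have := hH' (-d - 1)
  refine ⟨c, d, ?_⟩
  grind

theorem pastValue_le_of_futureValue_lt (ha : 2 < a) (ht : IsBinary t)
    (hsmall : ∀ n, a * |skew a t n| < 1) {i j : ℤ} (hij : futureValue a t i < futureValue a t j) :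
    pastValue a t j ≤ pastValue a t i := by
  by_contra! hlt
  obtain ⟨H, hH⟩ := exists_isHeight t
  obtain ⟨c, d, hsum⟩ := exists_block_sum_eq_add_two (a := a) ha (fun k => ht (i + k))
    (fun k => ht (j + k)) (hH.shift i) (hH.shift j)
    (by simpa only [futureValue, zero_add, add_assoc] using hij)
    (by simpa only [pastValue, zero_add, sub_eq_add_neg] using hlt)
  have := (isMarkoff_of_abs_skew_lt ha ht hsmall).balancedAt ht hH (c + d + 2)
    (i + (-d - 1)) (j + (-d - 1))
  grind

theorem futureValue_le_of_lt_pastValue (ha : 2 < a) (ht : IsBinary t)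
    (hsmall : ∀ n, a * |skew a t n| < 1) {i j : ℤ} (hij : futureValue a t i < pastValue a t j) :
    futureValue a t j ≤ pastValue a t i := by
  by_contra! hlt
  obtain ⟨H, hH⟩ := exists_isHeight t
  have hindex (k : ℕ) : j + 1 - (1 + k) = j - k := by ring
  obtain ⟨c, d, hsum⟩ := exists_block_sum_eq_add_two (a := a) ha (fun k => ht (i + k))
    (fun k => ht (j + 1 - k)) (hH.shift i) (hH.reflect j)
    (by simpa only [futureValue, pastValue, hindex, zero_add, add_assoc] using hij)
    (by simpa only [futureValue, pastValue, zero_add, neg_neg, sub_eq_add_neg] using hlt)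
  have := (isMarkoff_of_abs_skew_lt ha ht hsmall).balancedAt ht hH (c + d + 2)
    (i + (-d - 1)) (j - (c + 1))
  grind

theorem futureValue_mem_Icc_of_maximal_skew (ha : 2 < a) (ht : IsBinary t)
    (hsmall : ∀ n, a * |skew a t n| < 1) (hmax : ∀ n, |skew a t n| ≤ skew a t 0) (n : ℤ) :
    futureValue a t n ∈ Set.Icc (pastValue a t 0) (futureValue a t 0) := by
  obtain ⟨hge, hle⟩ := abs_le.1 (hmax n)
  unfold skew at hge hle
  constructor <;> by_contra! hlt
  · have := futureValue_le_of_lt_pastValue ha ht hsmall hlt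
    linarith
  · have := pastValue_le_of_futureValue_lt ha ht hsmall hlt
    linarith

theorem pastValue_mem_Icc_of_maximal_skew (ha : 2 < a) (ht : IsBinary t)
    (hsmall : ∀ n, a * |skew a t n| < 1) (hmax : ∀ n, |skew a t n| ≤ skew a t 0) (n : ℤ) :
    pastValue a t n ∈ Set.Icc (pastValue a t 0) (futureValue a t 0) := by
  obtain ⟨hge, hle⟩ := abs_le.1 (hmax n)
  unfold skew at hge hle
  constructor <;> by_contra! hlt
  · have := pastValue_le_of_futureValue_lt (i := n) (j := 0) ha ht hsmall (by linarith)
    linarith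
  · have := futureValue_le_of_lt_pastValue ha ht hsmall hlt
    linarith

end SmallSkew

/- The inverse branches of `v ↦ a v mod 1` are strictly increasing, and a gap of `V` between `x 0`
and `y 0` separates the points of the two branches, so it is carried by them to the gaps between
`x j` and `y j`. -/
theorem le_or_le_of_expanding_gap {a lo hi : ℝ} (ha : 0 < a) {V : Set ℝ}
    (hV : V ⊆ Set.Icc lo hi) (hpre : ∀ v ∈ V, ∃ w ∈ V, a * w = v ∨ a * w = 1 + v)
    (hgap : a * hi - 1 < a * lo) {u u' : ℕ → ℤ} (hu : IsBinary u) {x y : ℕ → ℝ}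
    (hx0 : x 0 = a * hi - 1) (hy0 : y 0 = a * lo)
    (hx : ∀ k, a * x k = u k + x (k + 1)) (hy : ∀ k, a * y k = u' k + y (k + 1))
    (hxlo : ∀ k, lo ≤ x k) (hyhi : ∀ k, y k ≤ hi) {j : ℕ} (huu' : ∀ r < j, u r = u' r) :
    ∀ v ∈ V, v ≤ x j ∨ y j ≤ v := by
  induction j with
  | zero =>
    intro v hv
    obtain ⟨w, hw, hvw | hvw⟩ := hpre v hv <;> obtain ⟨hlo, hhi⟩ := hV hw
    · right; nlinarith
    · left; nlinarith
  | succ j ih =>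
    intro v hv
    by_contra! hbetween
    obtain ⟨w, hw, hvw⟩ := hpre v hv
    obtain ⟨hlo, hhi⟩ := hV hw
    have hxj := hx j
    have hyj := hy j
    have hxlo := hxlo j
    have hyhi := hyhi j
    have hnot := ih (fun r hr => huu' r (hr.trans j.lt_succ_self)) w hw
    rw [← huu' j j.lt_succ_self] at hyj
    rcases hu j with h | h <;> rw [h] at hxj hyj <;> push_cast at hxj hyj <;>
      rcases hvw with hvw | hvw <;> rcases hnot with hnot | hnot <;> nlinarith

section MaximalSkew

variable {a : ℝ} {t : ℤ → ℤ}

theorem exists_preimage_of_mem_halfValues (ha : 1 < a) (ht : IsBinary t) {v : ℝ}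
    (hv : v ∈ halfValues a t) : ∃ w ∈ halfValues a t, a * w = v ∨ a * w = 1 + v := by
  rcases hv with ⟨n, rfl⟩ | ⟨n, rfl⟩
  · refine ⟨_, .inl ⟨n - 1, rfl⟩, ?_⟩
    rw [mul_futureValue ha ht, sub_add_cancel]
    rcases ht n with h | h <;> simp [h]
  · refine ⟨_, .inr ⟨n + 1, rfl⟩, ?_⟩
    rw [mul_pastValue ha ht, add_sub_cancel_right]
    rcases ht (n + 1) with h | h <;> simp [h]

theorem exists_gap_of_maximal_skew (ha : 2 < a) (ht : IsBinary t) (ht0 : t 0 = 0)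
    (ht1 : t 1 = 1) (hsmall : ∀ n, a * |skew a t n| < 1)
    (hmax : ∀ n, |skew a t n| ≤ skew a t 0) :
    ∃ m : ℕ, t (1 + 1 + m) = 0 ∧ t (-1 - m) = 1 ∧ (∀ r < m, t (1 + 1 + r) = t (-1 - r)) ∧
      ∀ v ∈ halfValues a t, v ≤ futureValue a t (1 + m) ∨ pastValue a t (-1 - m) ≤ v := by
  have ha1 : 1 < a := by linarith
  have hfuture_mem := futureValue_mem_Icc_of_maximal_skew ha ht hsmall hmax
  have hpast_mem := pastValue_mem_Icc_of_maximal_skew ha ht hsmall hmax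
  have hfuture0 : a * futureValue a t 0 = 1 + futureValue a t 1 := by
    simpa only [zero_add, ht1, Int.cast_one] using mul_futureValue ha1 ht 0
  have hpast0 : a * pastValue a t 0 = pastValue a t (-1) := by
    simpa only [zero_sub, zero_add, ht0, Int.cast_zero] using mul_pastValue ha1 ht 0
  have hgap : futureValue a t 1 < pastValue a t (-1) := by
    have := (mul_le_mul_of_nonneg_left (le_abs_self _) (by linarith)).trans_lt (hsmall 0)
    rw [skew] at this
    linarith
  obtain ⟨m, hm0, hm1, hagree⟩ := exists_first_difference_of_radixValue_lt ha
    (fun _ => ht _) (fun _ => ht _) hgap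
  refine ⟨m, hm0, hm1, hagree, ?_⟩
  exact le_or_le_of_expanding_gap (by linarith)
    (Set.union_subset (Set.range_subset_iff.2 hfuture_mem) (Set.range_subset_iff.2 hpast_mem))
    (fun _ => exists_preimage_of_mem_halfValues ha1 ht) (by linarith) (fun _ => ht _)
    (by simp [hfuture0]) (by simp [hpast0])
    (mul_futureValue_add ha1 ht 1) (mul_pastValue_sub ha1 ht (-1))
    (fun k => (hfuture_mem _).1) (fun k => (hpast_mem _).2) hagree

/- Past the gap, `futureValue a t (-1)` and `pastValue a t 1` would lie inside it unless both sides
return to their extreme positions. -/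
theorem exists_return_of_maximal_skew (ha : 2 < a) (ht : IsBinary t) (ht0 : t 0 = 0)
    (ht1 : t 1 = 1) (hsmall : ∀ n, a * |skew a t n| < 1)
    (hmax : ∀ n, |skew a t n| ≤ skew a t 0) :
    ∃ m : ℕ, (∀ r < m, t (1 + 1 + r) = t (-1 - r)) ∧
      a * futureValue a t (1 + m) = futureValue a t 0 ∧
      a * pastValue a t (-1 - m) = 1 + pastValue a t 0 := by
  have ha1 : 1 < a := by linarith
  obtain ⟨m, hm0, hm1, hagree, hgap⟩ := exists_gap_of_maximal_skew ha ht ht0 ht1 hsmall hmax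
  have hstep_future := mul_futureValue ha1 ht (1 + m)
  have hstep_past := mul_pastValue ha1 ht (-1 - m)
  rw [add_right_comm, hm0, Int.cast_zero, zero_add] at hstep_future
  rw [hm1, Int.cast_one] at hstep_past
  refine ⟨m, hagree, ?_, ?_⟩
  · refine hstep_future.trans (le_antisymm
      (futureValue_mem_Icc_of_maximal_skew ha ht hsmall hmax _).2 ?_)
    have hprev : a * futureValue a t (-1) = futureValue a t 0 := by
      simpa only [neg_add_cancel, zero_add, ht0, Int.cast_zero] using mul_futureValue ha1 ht (-1)
    have := (futureValue_mem_Ico ha ht 0).2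
    have := (pastValue_mem_Ico ha ht (-1 - m - 1)).1
    rcases hgap _ (.inl ⟨-1, rfl⟩) with h | h <;> nlinarith
  · refine hstep_past.trans (congrArg _ (le_antisymm ?_
      (pastValue_mem_Icc_of_maximal_skew ha ht hsmall hmax _).1))
    have hnext : a * pastValue a t 1 = 1 + pastValue a t 0 := by
      simpa only [sub_self, ht1, Int.cast_one] using mul_pastValue ha1 ht 1
    have := (pastValue_mem_Ico ha ht 0).1
    have := (futureValue_mem_Ico ha ht (1 + 1 + m)).2
    rcases hgap _ (.inr ⟨1, rfl⟩) with h | h <;> nlinarith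

theorem exists_skew_zero_eq (ha : 2 < a) (ht : IsBinary t) (ht0 : t 0 = 0) (ht1 : t 1 = 1)
    (hsmall : ∀ n, a * |skew a t n| < 1) (hmax : ∀ n, |skew a t n| ≤ skew a t 0) :
    ∃ m : ℕ, skew a t 0 * (a ^ (m + 2) - 1) = a ^ (m + 1) - 1 := by
  have ha1 : 1 < a := by linarith
  obtain ⟨m, hagree, hreturn_future, hreturn_past⟩ :=
    exists_return_of_maximal_skew ha ht ht0 ht1 hsmall hmax
  have hscale := pow_mul_sub_eq_of_agree (mul_futureValue_add ha1 ht 1)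
    (mul_pastValue_sub ha1 ht (-1)) hagree
  have hfuture0 := mul_futureValue ha1 ht 0
  have hpast0 := mul_pastValue ha1 ht 0
  simp only [zero_add, zero_sub, ht0, ht1, Int.cast_zero, Int.cast_one] at hfuture0 hpast0
  simp only [Nat.cast_zero, add_zero, sub_zero] at hscale
  refine ⟨m, ?_⟩
  unfold skew
  linear_combination a ^ (m + 1) * (hfuture0 - hpast0) + a * hscale + hreturn_future - hreturn_past

end MaximalSkew

/-- The closed form of `p n / q n`, the points of `𝓛(a)` below `1 / (1 + a)`. -/
noncomputable def spectrumPoint (a : ℝ) (n : ℕ) : ℝ :=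
  a * (a ^ n - 1) / ((1 + a) * (a ^ (n + 1) - 1))

section BoundedOrbit

variable {a b : ℝ}

theorem exists_binary_of_expanding (ha : 1 < a) {ρ : ℤ → ℝ} {s : ℤ → ℤ} (hρ : ∀ k, |ρ k| < 1)
    (hstep : ∀ k, ρ (k + 1) = a * (ρ k - s k)) :
    ∃ t : ℤ → ℤ, IsBinary t ∧ ∀ k, s k = t (k + 1) - t k := by
  classical
  refine ⟨fun k => if ρ k < 0 then 1 else 0, fun k => by beta_reduce; split_ifs <;> simp,
    fun k => ?_⟩
  have hk := abs_lt.1 (hρ k)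
  have hk1 := abs_lt.1 (hρ (k + 1))
  have hs := hstep k
  have hs_lt : s k < 2 := by
    have : (s k : ℝ) < 2 := by nlinarith
    exact_mod_cast this
  have hs_gt : -2 < s k := by
    have : (-2 : ℝ) < s k := by nlinarith
    exact_mod_cast this
  obtain h | h | h : s k = -1 ∨ s k = 0 ∨ s k = 1 := by omega
  all_goals
    rw [h] at hs ⊢
    push_cast at hs
    beta_reduce
    split_ifs <;> first | rfl | nlinarith

theorem eq_zero_of_bounded_of_recurrence (hb : 2 < b) {d : ℤ → ℝ} {C : ℝ} (hC : ∀ k, |d k| ≤ C)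
    (hd : ∀ k, d (k + 1) + d (k - 1) = b * d k) (k : ℤ) : d k = 0 := by
  have hbdd : BddAbove (Set.range fun k => |d k|) := ⟨C, by rintro _ ⟨k, rfl⟩; exact hC k⟩
  set M := ⨆ k, |d k|
  have hM (k : ℤ) : |d k| ≤ M := le_ciSup hbdd k
  have hcontract (k : ℤ) : |d k| ≤ 2 / b * M := by
    have : b * |d k| ≤ 2 * M := calc
      b * |d k| = |d (k + 1) + d (k - 1)| := by rw [hd, abs_mul, abs_of_pos (by linarith : 0 < b)]
      _ ≤ |d (k + 1)| + |d (k - 1)| := abs_add_le _ _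
      _ ≤ 2 * M := by linarith [hM (k + 1), hM (k - 1)]
    rw [div_mul_eq_mul_div, le_div_iff₀ (by linarith)]
    linarith
  have hM_le : M ≤ 2 / b * M := ciSup_le hcontract
  have hratio : 2 / b < 1 := (div_lt_one (by linarith)).2 hb
  have := abs_nonneg (d k)
  have := hM k
  exact abs_eq_zero.1 (by nlinarith)

theorem two_lt_of_sq_add_one_eq (ha : 1 < a) (hab : a ^ 2 + 1 = b * a) : 2 < b := by
  nlinarith [sq_pos_of_pos (sub_pos.2 ha)]

theorem orbit_eq_skew (ha : 1 < a) (hab : a ^ 2 + 1 = b * a) {e : ℤ → ℝ} {t : ℤ → ℤ} {l : ℝ}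
    (ht : IsBinary t) (hle : ∀ k, |e k| ≤ l)
    (he : ∀ k, e (k + 1) + e (k - 1) = b * e k - (t (k + 1) - t k)) (n : ℤ) :
    (1 + a) * e n = a * skew a t n := by
  refine sub_eq_zero.1 (eq_zero_of_bounded_of_recurrence (two_lt_of_sq_add_one_eq ha hab)
    (d := fun k => (1 + a) * e k - a * skew a t k) (C := (1 + a) * l + a * (1 / (a - 1)))
    (fun k => ?_) (fun k => ?_) n)
  · refine (abs_sub _ _).trans (add_le_add ?_ ?_) <;>
      rw [abs_mul, abs_of_pos (by linarith)] <;> gcongr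
    exacts [hle k, abs_skew_le ha ht k]
  · linear_combination (1 + a) * he k - skew_recurrence ha hab ht k

theorem exists_spectrumPoint_of_orbit (ha : 2 < a) (hab : a ^ 2 + 1 = b * a) {e : ℤ → ℝ}
    {s : ℤ → ℤ} (he : ∀ k, e (k + 1) + e (k - 1) = b * e k - s k) (hle : ∀ k, |e k| ≤ e 0)
    (hpos : 0 < e 0) (hlt : (1 + a) * e 0 < 1) : ∃ n, e 0 = spectrumPoint a n := by
  have ha1 : 1 < a := by linarith
  have hb := two_lt_of_sq_add_one_eq ha1 hab
  obtain ⟨t, ht, hst⟩ := exists_binary_of_expanding ha1 (ρ := fun k => a * e k - e (k - 1)) (s := s)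
    (fun k => by
      have hk := abs_le.1 (hle k)
      have hk1 := abs_le.1 (hle (k - 1))
      rw [abs_lt]
      constructor <;> nlinarith)
    (fun k => by
      rw [add_sub_cancel_right]
      linear_combination a * he k - e k * hab)
  have hs0 : 0 < s 0 := by
    have : (0 : ℝ) < s 0 := by nlinarith [abs_le.1 (hle (0 + 1)), abs_le.1 (hle (0 - 1)), he 0]
    exact_mod_cast this
  obtain ⟨ht0, ht1⟩ : t 0 = 0 ∧ t 1 = 1 := by
    have := hst 0
    have := ht 0
    have := ht 1
    grind
  have hskew := orbit_eq_skew ha1 hab ht hle fun k => by rw [he, hst]; push_cast; ring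
  have hskew_abs (k : ℤ) : (1 + a) * |e k| = a * |skew a t k| := by
    rw [← abs_of_pos (by linarith : 0 < 1 + a), ← abs_mul, hskew, abs_mul, abs_of_pos (by linarith)]
  obtain ⟨m, hm⟩ := exists_skew_zero_eq ha ht ht0 ht1
    (fun n => by nlinarith [hskew_abs n, hle n])
    (fun n => by nlinarith [hskew_abs n, hle n, hskew 0])
  have hpow : 1 < a ^ (m + 2) := one_lt_pow₀ ha1 (by omega)
  refine ⟨m + 1, (eq_div_iff (by nlinarith)).2 ?_⟩
  linear_combination (a ^ (m + 2) - 1) * hskew 0 + a * hm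

end BoundedOrbit

section LimitOrbit

open Filter Topology

/- Along an ultrafilter on which `|ε n|` approaches its limsup, all the shifts of `ε` converge. -/
theorem exists_limit_sequence {ε : ℕ → ℝ} {C : ℝ} (hC : ∀ n, |ε n| ≤ C) :
    ∃ (U : Ultrafilter ℕ) (e : ℤ → ℝ), ↑U ≤ (atTop : Filter ℕ) ∧
      (∀ k, Tendsto (fun n : ℕ => ε ((n : ℤ) + k).toNat) U (𝓝 (e k))) ∧
      |e 0| = limsup (fun n => |ε n|) atTop ∧ ∀ k, |e k| ≤ limsup (fun n => |ε n|) atTop := by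
  have hbdd : IsBoundedUnder (· ≤ ·) atTop fun n => |ε n| := isBoundedUnder_of ⟨C, hC⟩
  have hcobdd : IsCoboundedUnder (· ≤ ·) atTop fun n => |ε n| :=
    IsBoundedUnder.isCoboundedUnder_le (isBoundedUnder_of ⟨0, fun n => abs_nonneg _⟩)
  obtain ⟨U, hU, hUlim⟩ := mapClusterPt_iff_ultrafilter.1 (MapClusterPt.limsup hcobdd hbdd)
  have hconv (k : ℤ) : ∃ x, Tendsto (fun n : ℕ => ε ((n : ℤ) + k).toNat) U (𝓝 x) := by
    obtain ⟨x, -, hx⟩ := (isCompact_Icc (a := -C) (b := C)).ultrafilter_le_nhds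
      (U.map fun n : ℕ => ε ((n : ℤ) + k).toNat)
      (le_principal_iff.2 (Filter.mem_map.2 (univ_mem' fun n => abs_le.1 (hC _))))
    exact ⟨x, hx⟩
  choose e he using hconv
  refine ⟨U, e, hU, he, ?_, fun k => ?_⟩
  · exact tendsto_nhds_unique (he 0).abs (by simpa using hUlim)
  · have hshift : Tendsto (fun n : ℕ => ((n : ℤ) + k).toNat) U atTop := by
      refine (tendsto_atTop.2 fun m => ?_).mono_left hU
      filter_upwards [eventually_ge_atTop (m + k.natAbs)] with n hn
      omega
    exact ((he k).abs.mapClusterPt.of_comp hshift).le_limsup hbdd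

theorem exists_limit_orbit {a : ℝ} {b : ℤ} (hab : a ^ 2 + 1 = b * a) (ξ : ℝ) :
    ∃ (e : ℤ → ℝ) (s : ℤ → ℤ), (∀ k, e (k + 1) + e (k - 1) = b * e k - s k) ∧
      |e 0| = limsupDist a ξ ∧ ∀ k, |e k| ≤ limsupDist a ξ := by
  set ε : ℕ → ℝ := fun n => ξ * a ^ n - round (ξ * a ^ n) with hε
  obtain ⟨U, e, hU, he, he0, hle⟩ := exists_limit_sequence (ε := ε) fun n => abs_sub_round _
  have hinteger (k : ℤ) : b * e k - (e (k + 1) + e (k - 1)) ∈ Set.range ((↑) : ℤ → ℝ) := by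
    refine Int.isClosedEmbedding_coe_real.isClosed_range.mem_of_tendsto
      (((he k).const_mul _).sub ((he (k + 1)).add (he (k - 1)))) ?_
    filter_upwards [(eventually_ge_atTop (k.natAbs + 1)).filter_mono hU] with n hn
    obtain ⟨m, hm⟩ := Int.eq_ofNat_of_zero_le (by omega : 0 ≤ (n : ℤ) + (k - 1))
    rw [show ((n : ℤ) + (k - 1)).toNat = m by omega, show ((n : ℤ) + k).toNat = m + 1 by omega,
      show ((n : ℤ) + (k + 1)).toNat = m + 2 by omega]
    refine ⟨round (ξ * a ^ (m + 2)) + round (ξ * a ^ m) - b * round (ξ * a ^ (m + 1)), ?_⟩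
    simp only [hε]
    push_cast
    linear_combination ξ * a ^ m * hab
  choose s hs using hinteger
  exact ⟨e, s, fun k => by rw [hs]; ring, he0, hle⟩

theorem exists_spectrumPoint_of_limsupDist_lt {a : ℝ} {b : ℤ} (ha : 2 < a)
    (hab : a ^ 2 + 1 = b * a) {ξ : ℝ} (hlt : limsupDist a ξ < 1 / (1 + a)) :
    ∃ n, limsupDist a ξ = spectrumPoint a n := by
  obtain ⟨e, s, he, he0, hle⟩ := exists_limit_orbit hab ξ
  rw [lt_div_iff₀ (by linarith), mul_comm] at hlt
  rw [← he0] at hle hlt ⊢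
  rcases lt_trichotomy (e 0) 0 with hneg | hzero | hpos
  · rw [abs_of_neg hneg] at hle hlt ⊢
    exact exists_spectrumPoint_of_orbit ha hab (e := -e) (s := -s)
      (fun k => by simp only [Pi.neg_apply]; push_cast; linear_combination -he k)
      (by simpa only [Pi.neg_apply, abs_neg] using hle) (neg_pos.2 hneg) hlt
  · exact ⟨0, by simp [hzero, spectrumPoint]⟩
  · rw [abs_of_pos hpos] at hle hlt ⊢
    exact exists_spectrumPoint_of_orbit ha hab he hle hpos hlt

end LimitOrbit

section Realization

open Filter Topology

theorem limsup_eq_of_tendsto_sub {ι : Type*} {l : Filter ι} [l.NeBot] {u v : ι → ℝ} {C : ℝ}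
    (hu : ∀ i, |u i| ≤ C) (hv : ∀ i, |v i| ≤ C) (huv : Tendsto (fun i => u i - v i) l (𝓝 0)) :
    limsup u l = limsup v l := by
  have hgreatest {w : ι → ℝ} (hw : ∀ i, |w i| ≤ C) :
      IsGreatest {x | MapClusterPt x l w} (limsup w l) :=
    isGreatest_mapClusterPt_limsup
      (IsBoundedUnder.isCoboundedUnder_le (isBoundedUnder_of ⟨-C, fun i => (abs_le.1 (hw i)).1⟩))
      (isBoundedUnder_of ⟨C, fun i => (abs_le.1 (hw i)).2⟩)
  have hcluster (x : ℝ) : MapClusterPt x l u ↔ MapClusterPt x l v := by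
    simp only [mapClusterPt_iff_ultrafilter]
    refine exists_congr fun U => and_congr_right fun hU => ⟨fun h => ?_, fun h => ?_⟩
    · simpa using h.sub (huv.mono_left hU)
    · simpa using h.add (huv.mono_left hU)
  exact (hgreatest hu).unique (by simpa only [hcluster] using hgreatest hv)

theorem limsup_eq_of_forall_pos {ι : Type*} {l : Filter ι} {u : ι → ℝ} {x : ℝ}
    (hle : ∀ δ > 0, ∀ᶠ i in l, u i ≤ x + δ) (hge : ∀ δ > 0, ∃ᶠ i in l, x - δ ≤ u i) :
    limsup u l = x := by
  refine le_antisymm (le_of_forall_pos_le_add fun δ hδ => ?_)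
    (le_of_forall_pos_le_add fun δ hδ => ?_)
  · exact limsup_le_of_le (IsCoboundedUnder.of_frequently_ge (hge δ hδ)) (hle δ hδ)
  · rw [← sub_le_iff_le_add]
    exact le_limsup_of_frequently_le (hge δ hδ) ⟨x + δ, hle δ hδ⟩

theorem abs_distNearestInt_sub_abs_le {x : ℝ} (hx : |x| ≤ 1 / 2) (z : ℤ) (y : ℝ) :
    abs (distNearestInt (z + x + y) - |x|) ≤ |y| := by
  have hcircle (r : ℝ) : distNearestInt r = ‖(r : UnitAddCircle)‖ := UnitAddCircle.norm_eq.symm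
  have hnorm : ‖(x : UnitAddCircle)‖ = |x| :=
    (AddCircle.norm_coe_eq_abs_iff 1 one_ne_zero).2 (by simpa using hx)
  have hshift : ((z + x + y : ℝ) : UnitAddCircle) - (x : UnitAddCircle) = (y : UnitAddCircle) := by
    have hz : ((z : ℝ) : UnitAddCircle) = 0 := by simp
    rw [AddCircle.coe_add, AddCircle.coe_add, hz]
    abel
  rw [hcircle, ← hnorm]
  calc _ ≤ ‖(y : UnitAddCircle)‖ := hshift ▸ abs_norm_sub_norm_le _ _
    _ ≤ |y| := by
      rw [← hcircle]
      simpa only [distNearestInt, Int.cast_zero, sub_zero] using round_le y 0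

variable {a : ℝ} {t : ℤ → ℤ}

theorem exists_int_eq_futureValue_mul_pow {b : ℤ} (ha : 1 < a) (hab : a ^ 2 + 1 = b * a)
    (ht : IsBinary t) (n : ℕ) :
    ∃ z : ℤ, a * (futureValue a t 0 * a ^ n) =
      (1 + a) * z + a * (skew a t n + pastValue a t 0 / a ^ n) := by
  have ha0 : a ≠ 0 := by positivity
  induction n using Nat.twoStepInduction with
  | zero => exact ⟨0, by simp [skew]⟩
  | one =>
    refine ⟨t 1, ?_⟩
    have hfuture := mul_futureValue ha ht 0
    have hpast := mul_pastValue ha ht 1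
    have hcancel : a * (pastValue a t 0 / a ^ 1) = pastValue a t 0 := by field_simp
    simp only [zero_add, sub_self, skew, Nat.cast_one] at hfuture hpast ⊢
    linear_combination a * hfuture + hpast - hcancel
  | more n ih ih' =>
    obtain ⟨z, hz⟩ := ih
    obtain ⟨z', hz'⟩ := ih'
    have hrec := skew_recurrence ha hab ht (n + 1)
    have hpow : pastValue a t 0 / a ^ n = a ^ 2 * (pastValue a t 0 / a ^ (n + 2)) := by
      field_simp
      ring
    have hpow' : pastValue a t 0 / a ^ (n + 1) = a * (pastValue a t 0 / a ^ (n + 2)) := by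
      field_simp
      ring
    rw [hpow] at hz
    rw [hpow'] at hz'
    rw [add_sub_cancel_right, add_assoc, one_add_one_eq_two] at hrec
    refine ⟨b * z' - z + (t (n + 2) - t (n + 1)), ?_⟩
    push_cast at hz' ⊢
    linear_combination b * hz' - hz - hrec + a *
      (futureValue a t 0 * a ^ n - pastValue a t 0 / a ^ (n + 2)) * hab

theorem abs_mul_skew_le_half {b : ℤ} (ha : 2 < a) (hab : a ^ 2 + 1 = b * a) (ht : IsBinary t)
    (n : ℤ) : |a / (1 + a) * skew a t n| ≤ 1 / 2 := by
  have hb : (3 : ℝ) ≤ b := by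
    have : 2 < b := by exact_mod_cast two_lt_of_sq_add_one_eq (by linarith) hab
    exact_mod_cast this
  rw [abs_mul, abs_of_pos (by positivity)]
  calc a / (1 + a) * |skew a t n| ≤ a / (1 + a) * (1 / (a - 1)) := by
        gcongr
        exact abs_skew_le (by linarith) ht n
    _ ≤ 1 / 2 := by
        rw [div_mul_div_comm, div_le_div_iff₀ (by nlinarith) (by norm_num)]
        nlinarith

theorem limsupDist_mul_futureValue {b : ℤ} (ha : 2 < a) (hab : a ^ 2 + 1 = b * a)
    (ht : IsBinary t) :
    limsupDist a (a / (1 + a) * futureValue a t 0) =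
      a / (1 + a) * limsup (fun n : ℕ => |skew a t n|) atTop := by
  have hc : 0 < a / (1 + a) := by positivity
  have hskew (n : ℕ) := abs_mul_skew_le_half ha hab ht n
  have herror : Tendsto (fun n : ℕ => |a / (1 + a) * (pastValue a t 0 / a ^ n)|) atTop (𝓝 0) := by
    have hdiv := tendsto_const_nhds.div_atTop (a := pastValue a t 0)
      (tendsto_pow_atTop_atTop_of_one_lt (by linarith : 1 < a))
    simpa using (hdiv.const_mul (a / (1 + a))).abs
  have hclose (n : ℕ) : abs (distNearestInt (a / (1 + a) * futureValue a t 0 * a ^ n) -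
      |a / (1 + a) * skew a t n|) ≤ |a / (1 + a) * (pastValue a t 0 / a ^ n)| := by
    obtain ⟨z, hz⟩ := exists_int_eq_futureValue_mul_pow (by linarith) hab ht n
    convert abs_distNearestInt_sub_abs_le (hskew n) z _ using 4
    generalize pastValue a t 0 / a ^ n = y at hz ⊢
    field_simp
    linear_combination hz
  calc limsupDist a (a / (1 + a) * futureValue a t 0)
    _ = limsup (fun n : ℕ => |a / (1 + a) * skew a t n|) atTop :=
        limsup_eq_of_tendsto_sub (C := 1 / 2)
          (fun n => (abs_abs _).trans_le (abs_sub_round _))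
          (fun n => (abs_abs _).trans_le (hskew n))
          (squeeze_zero_norm hclose herror)
    _ = a / (1 + a) * limsup (fun n : ℕ => |skew a t n|) atTop := by
        simp only [abs_mul, abs_of_pos hc]
        exact ((monotone_mul_left_of_nonneg hc.le).map_limsup_of_continuousAt
          (fun n : ℕ => |skew a t n|)
          (continuous_const_mul _).continuousAt
          (isBoundedUnder_of ⟨1 / (a - 1), fun n => abs_skew_le (by linarith) ht n⟩)
          (IsBoundedUnder.isCoboundedUnder_le
            (isBoundedUnder_of ⟨0, fun n => abs_nonneg _⟩))).symm

end Realization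

section PeriodicWord

open Filter Topology

/-- The periodic word with a one exactly at the multiples of `N`. -/
def periodicWord (N : ℕ) (k : ℤ) : ℤ := if (N : ℤ) ∣ k then 1 else 0

theorem isBinary_periodicWord (N : ℕ) : IsBinary (periodicWord N) := fun k => by
  unfold periodicWord
  split_ifs <;> simp

theorem periodicWord_neg (N : ℕ) (k : ℤ) : periodicWord N (-k) = periodicWord N k := by
  simp only [periodicWord, dvd_neg]

variable {a : ℝ}

theorem mul_pow_emod (a : ℝ) (n : ℕ) (k : ℤ) :
    a * a ^ (k % (n + 1)).toNat =
      periodicWord (n + 1) (k + 1) * (a ^ (n + 1) - 1) + a ^ ((k + 1) % (n + 1)).toNat := by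
  have hnonneg := Int.emod_nonneg k (by omega : (n : ℤ) + 1 ≠ 0)
  have hlt := Int.emod_lt_of_pos k (by omega : 0 < (n : ℤ) + 1)
  have hsucc : (k + 1) % (n + 1) = (k % (n + 1) + 1) % (n + 1) := (Int.emod_add_emod _ _ _).symm
  simp only [periodicWord, Nat.cast_succ, Int.dvd_iff_emod_eq_zero, hsucc]
  obtain ⟨m, hm⟩ := Int.eq_ofNat_of_zero_le hnonneg
  rw [hm] at hlt ⊢
  obtain rfl | hmn : m = n ∨ m < n := by omega
  · simp [pow_succ']
  · rw [Int.emod_eq_of_lt (by omega) (by omega), if_neg (by omega)]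
    simp [pow_succ', Int.toNat_natCast_add_one]

theorem futureValue_periodicWord (ha : 1 < a) (n : ℕ) (k : ℤ) :
    futureValue a (periodicWord (n + 1)) k = a ^ (k % (n + 1)).toNat / (a ^ (n + 1) - 1) := by
  have hden : 0 < a ^ (n + 1) - 1 := sub_pos.2 (one_lt_pow₀ ha n.succ_ne_zero)
  have hvalue := eq_radixValue_of_bounded ha (u := fun r : ℕ => periodicWord (n + 1) (k + 1 + r))
    (fun r => isBinary_periodicWord _ _)
    (F := fun r => a ^ ((k + r) % (n + 1)).toNat / (a ^ (n + 1) - 1))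
    (C := a ^ (n + 1) / (a ^ (n + 1) - 1)) (fun r => ?_) (fun r => ?_)
  · simpa [futureValue] using hvalue.symm
  · rw [← mul_div_assoc, mul_pow_emod, add_div, mul_div_cancel_right₀ _ hden.ne', Nat.cast_succ,
      add_right_comm k 1, add_assoc k]
  · rw [abs_of_pos (by positivity)]
    gcongr
    · exact ha.le
    · have := Int.emod_lt_of_pos (k + r) (by omega : 0 < (n : ℤ) + 1)
      omega

theorem pastValue_periodicWord (a : ℝ) (N : ℕ) (k : ℤ) :
    pastValue a (periodicWord N) k = futureValue a (periodicWord N) (-k - 1) := by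
  unfold pastValue futureValue
  congr 1 with r
  rw [← periodicWord_neg]
  ring_nf

theorem futureValue_periodicWord_mem_Icc (ha : 1 < a) (n : ℕ) (k : ℤ) :
    futureValue a (periodicWord (n + 1)) k ∈
      Set.Icc (1 / (a ^ (n + 1) - 1)) (a ^ n / (a ^ (n + 1) - 1)) := by
  have hden : 0 < a ^ (n + 1) - 1 := sub_pos.2 (one_lt_pow₀ ha n.succ_ne_zero)
  rw [futureValue_periodicWord ha]
  constructor <;> gcongr
  · exact one_le_pow₀ ha.le
  · exact ha.le
  · have := Int.emod_lt_of_pos k (by omega : 0 < (n : ℤ) + 1)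
    omega

theorem limsup_abs_skew_periodicWord (ha : 1 < a) (n : ℕ) :
    limsup (fun k : ℕ => |skew a (periodicWord (n + 1)) k|) atTop =
      (a ^ n - 1) / (a ^ (n + 1) - 1) := by
  refine limsup_eq_of_forall_pos (fun δ hδ => .of_forall fun k => ?_) fun δ hδ => ?_
  · obtain ⟨hfuture_ge, hfuture_le⟩ := futureValue_periodicWord_mem_Icc ha n k
    obtain ⟨hpast_ge, hpast_le⟩ := futureValue_periodicWord_mem_Icc ha n (-k - 1)
    rw [skew, pastValue_periodicWord, sub_div, abs_le]
    constructor <;> linarith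
  · refine frequently_atTop.2 fun m => ⟨(n + 1) * m, Nat.le_mul_of_pos_left m n.succ_pos, ?_⟩
    have hlast : (-((n + 1) * m : ℤ) - 1) % (n + 1) = n := by
      rw [show -((n + 1) * m : ℤ) - 1 = n + (n + 1) * (-(m + 1)) by ring,
        Int.add_mul_emod_self_left, Int.emod_eq_of_lt (by omega) (by omega)]
    push_cast
    rw [skew, pastValue_periodicWord, futureValue_periodicWord ha, futureValue_periodicWord ha,
      hlast, Int.mul_emod_right, abs_sub_comm, ← sub_div]
    exact (sub_le_self _ hδ.le).trans (le_abs_self _)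

theorem limsupDist_periodicWord {b : ℤ} (ha : 2 < a) (hab : a ^ 2 + 1 = b * a) (n : ℕ) :
    limsupDist a (a / (1 + a) * futureValue a (periodicWord (n + 1)) 0) = spectrumPoint a n := by
  rw [limsupDist_mul_futureValue ha hab (isBinary_periodicWord _),
    limsup_abs_skew_periodicWord (by linarith), div_mul_div_comm, spectrumPoint]

end PeriodicWord

section SparseWord

open Filter Topology

/-- The gaps between the ones of `t` grow to infinity on the right. -/
def IsSparse (t : ℤ → ℤ) : Prop :=
  ∀ L : ℕ, ∃ M : ℤ, ∀ m n, M ≤ m → m < n → t m = 1 → t n = 1 → m + L < n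

variable {a : ℝ} {t : ℤ → ℤ}

theorem radixValue_le_of_isolated (ha : 2 < a) {u : ℕ → ℤ} (hu : IsBinary u) {L : ℕ}
    (hL : u 0 = 1 → ∀ r < L, u (r + 1) = 0) : radixValue a u ≤ 1 / a + 1 / a ^ L := by
  have hstep := mul_radixValue (by linarith) hu
  have htail : u 0 + radixValue a (fun k => u (k + 1)) ≤ 1 + 1 / a ^ L := by
    have hpow : 0 < 1 / a ^ L := by positivity
    rcases hu 0 with h0 | h0
    · have := radixValue_lt_one ha fun k => hu (k + 1)
      simp only [h0, Int.cast_zero]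
      linarith
    · rw [h0, Int.cast_one, add_le_add_iff_left, le_div_iff₀' (by positivity)]
      exact pow_mul_radixValue_le_one ha (fun k => hu (k + 1)) (hL h0)
  calc radixValue a u ≤ (1 + 1 / a ^ L) / a := by rwa [le_div_iff₀' (by linarith), hstep]
    _ ≤ 1 / a + 1 / a ^ L := by
      rw [add_div]
      exact add_le_add le_rfl (div_le_self (by positivity) (by linarith))

theorem IsSparse.eventually_isolated (hsparse : IsSparse t) (ht : IsBinary t) (L : ℕ) :
    ∀ᶠ n in atTop, t n = 1 → ∀ r < L, t (n + 1 + r) = 0 ∧ t (n - 1 - r) = 0 := by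
  obtain ⟨M, hM⟩ := hsparse L
  filter_upwards [eventually_ge_atTop (M + L)] with n hn htn r hr
  refine ⟨(ht _).resolve_right fun h => ?_, (ht _).resolve_right fun h => ?_⟩
  · have := hM n (n + 1 + r) (by omega) (by omega) htn h
    omega
  · have := hM (n - 1 - r) n (by omega) (by omega) h htn
    omega

theorem IsSparse.eventually_abs_skew_le (hsparse : IsSparse t) (ha : 2 < a) (ht : IsBinary t)
    (L : ℕ) : ∀ᶠ n in atTop, |skew a t n| ≤ 1 / a + 1 / a ^ L := by
  have hisolated := hsparse.eventually_isolated ht L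
  filter_upwards [hisolated, tendsto_atTop_add_const_right _ 1 tendsto_id |>.eventually hisolated]
    with n hpast hfuture
  refine abs_sub_le_of_nonneg_of_le (futureValue_mem_Ico ha ht n).1 ?_
    (pastValue_mem_Ico ha ht n).1 ?_ <;>
    refine radixValue_le_of_isolated ha (fun _ => ht _) fun h0 r hr => ?_
  · have := (hfuture (by simpa using h0) r hr).1
    grind
  · have := (hpast (by simpa using h0) r hr).2
    grind

theorem IsSparse.eventually_le_skew (hsparse : IsSparse t) (ha : 2 < a) (ht : IsBinary t)
    (L : ℕ) : ∀ᶠ n in atTop, t n = 1 → 1 / a - 1 / a ^ L ≤ skew a t (n - 1) := by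
  filter_upwards [hsparse.eventually_isolated ht L] with n hisolated htn
  have hstep := mul_futureValue (by linarith : 1 < a) ht (n - 1)
  have hnext := (futureValue_mem_Ico ha ht n).1
  rw [sub_add_cancel, htn, Int.cast_one] at hstep
  have hfuture : 1 / a ≤ futureValue a t (n - 1) := by
    rw [div_le_iff₀' (by linarith)]
    linarith
  have hpast : pastValue a t (n - 1) ≤ 1 / a ^ L := by
    rw [le_div_iff₀' (by positivity)]
    exact pow_mul_radixValue_le_one ha (fun _ => ht _) fun r hr => (hisolated htn r hr).2
  exact sub_le_sub hfuture hpast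

theorem IsSparse.limsup_abs_skew (hsparse : IsSparse t) (ha : 2 < a) (ht : IsBinary t)
    (hone : ∃ᶠ n : ℕ in atTop, t n = 1) : limsup (fun n : ℕ => |skew a t n|) atTop = 1 / a := by
  have hsmall {δ : ℝ} (hδ : 0 < δ) : ∃ L : ℕ, 1 / a ^ L < δ := by
    simpa only [one_div_pow] using
      exists_pow_lt_of_lt_one hδ ((div_lt_one (by linarith)).2 (by linarith : 1 < a))
  refine limsup_eq_of_forall_pos (fun δ hδ => ?_) fun δ hδ => ?_
  · obtain ⟨L, hL⟩ := hsmall hδ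
    filter_upwards [tendsto_natCast_atTop_atTop.eventually
      (hsparse.eventually_abs_skew_le ha ht L)] with n hn
    linarith
  · obtain ⟨L, hL⟩ := hsmall hδ
    have hskew := hone.and_eventually ((eventually_ge_atTop 1).and
      (tendsto_natCast_atTop_atTop.eventually (hsparse.eventually_le_skew ha ht L)))
    refine (tendsto_sub_atTop_nat 1).frequently (hskew.mono ?_)
    rintro n ⟨htn, hn, hle⟩
    rw [Nat.cast_sub hn, Nat.cast_one]
    linarith [hle htn, le_abs_self (skew a t (n - 1))]

theorem IsSparse.limsupDist_eq {b : ℤ} (hsparse : IsSparse t) (ha : 2 < a)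
    (hab : a ^ 2 + 1 = b * a) (ht : IsBinary t) (hone : ∃ᶠ n : ℕ in atTop, t n = 1) :
    limsupDist a (a / (1 + a) * futureValue a t 0) = 1 / (1 + a) := by
  rw [limsupDist_mul_futureValue ha hab ht, hsparse.limsup_abs_skew ha ht hone]
  field_simp

open Classical in
/-- The word whose ones are at the positions `2 ^ m` with `m ∈ A`. -/
noncomputable def powTwoWord (A : Set ℕ) (k : ℤ) : ℤ := if ∃ m ∈ A, k = 2 ^ m then 1 else 0

variable {A : Set ℕ}

theorem isBinary_powTwoWord (A : Set ℕ) : IsBinary (powTwoWord A) := fun k => by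
  unfold powTwoWord
  split_ifs <;> simp

theorem powTwoWord_eq_one_iff {k : ℤ} : powTwoWord A k = 1 ↔ ∃ m ∈ A, k = 2 ^ m := by
  simp [powTwoWord]

theorem powTwoWord_two_pow {m : ℕ} : powTwoWord A (2 ^ m) = 1 ↔ m ∈ A := by
  rw [powTwoWord_eq_one_iff]
  refine ⟨fun ⟨k, hk, hmk⟩ => ?_, fun hm => ⟨m, hm, rfl⟩⟩
  rwa [pow_right_injective₀ (by norm_num) (by norm_num) hmk]

theorem isSparse_powTwoWord (A : Set ℕ) : IsSparse (powTwoWord A) := by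
  refine fun L => ⟨L + 1, fun m n hm hmn htm htn => ?_⟩
  obtain ⟨i, -, rfl⟩ := powTwoWord_eq_one_iff.1 htm
  obtain ⟨j, -, rfl⟩ := powTwoWord_eq_one_iff.1 htn
  have hij : i + 1 ≤ j := (pow_lt_pow_iff_right₀ one_lt_two).1 hmn
  have : (2 : ℤ) ^ (i + 1) ≤ 2 ^ j := pow_le_pow_right₀ one_le_two hij
  rw [pow_succ] at this
  omega

theorem frequently_powTwoWord_eq_one (hA : A.Infinite) :
    ∃ᶠ n : ℕ in atTop, powTwoWord A n = 1 := by
  refine frequently_atTop.2 fun N => ?_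
  obtain ⟨m, hm, hNm⟩ := hA.exists_gt N
  exact ⟨2 ^ m, (hNm.trans m.lt_two_pow_self).le, by exact_mod_cast powTwoWord_two_pow.2 hm⟩

theorem futureValue_powTwoWord_injective (ha : 2 < a) :
    Function.Injective fun A => futureValue a (powTwoWord A) 0 := by
  intro A B hAB
  have hword := radixValue_injOn ha (fun _ => isBinary_powTwoWord A _)
    (fun _ => isBinary_powTwoWord B _) hAB
  ext m
  have hm := congrFun hword (2 ^ m - 1)
  have hpos : ((0 : ℤ) + 1 + (2 ^ m - 1 : ℕ)) = 2 ^ m := by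
    push_cast [Nat.one_le_two_pow]
    ring
  rw [← powTwoWord_two_pow, ← powTwoWord_two_pow]
  simp only [hpos] at hm
  rw [hm]

theorem not_countable_setOf_infinite (α : Type*) [Countable α] [Infinite α] :
    ¬ {A : Set α | A.Infinite}.Countable := fun hcount => by
  have hunion : (Set.univ : Set (Set α)) = {A | A.Finite} ∪ {A | A.Infinite} := by
    ext A
    simp [Set.finite_or_infinite]
  obtain ⟨f, hf⟩ := @exists_injective_nat (Set α)
    (Set.countable_univ_iff.1 (hunion ▸ Set.Countable.ofPred_finite.union hcount))
  exact Function.cantor_injective _ ((Infinite.natEmbedding α).injective.comp hf)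

theorem not_countable_setOf_limsupDist_eq {b : ℤ} (ha : 2 < a) (hab : a ^ 2 + 1 = b * a) :
    ¬ {ξ | limsupDist a ξ = 1 / (1 + a)}.Countable := fun hcount => by
  have hc : a / (1 + a) ≠ 0 := by positivity
  refine not_countable_setOf_infinite ℕ (Set.MapsTo.countable_of_injOn
    (f := fun A => a / (1 + a) * futureValue a (powTwoWord A) 0) (fun A hA => ?_) ?_ hcount)
  · exact (isSparse_powTwoWord A).limsupDist_eq ha hab (isBinary_powTwoWord A)
      (frequently_powTwoWord_eq_one hA)
  · exact ((mul_right_injective₀ hc).comp (futureValue_powTwoWord_injective ha)).injOn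

end SparseWord

section SpectrumPoint

open Filter Topology

variable {a : ℝ}

theorem strictMono_spectrumPoint (ha : 1 < a) : StrictMono (spectrumPoint a) := by
  refine strictMono_nat_of_lt_succ fun n => ?_
  have hn : 0 < a ^ (n + 1) - 1 := sub_pos.2 (one_lt_pow₀ ha n.succ_ne_zero)
  have hn' : 0 < a ^ (n + 2) - 1 := sub_pos.2 (one_lt_pow₀ ha (n + 1).succ_ne_zero)
  have hcross : (a ^ n - 1) * (a ^ (n + 2) - 1) < (a ^ (n + 1) - 1) * (a ^ (n + 1) - 1) := by
    have : 0 < a ^ n * (a - 1) ^ 2 := by have := sub_pos.2 ha; positivity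
    linear_combination this
  rw [spectrumPoint, spectrumPoint, mul_div_mul_comm, mul_div_mul_comm]
  exact mul_lt_mul_of_pos_left ((div_lt_div_iff₀ hn hn').2 hcross) (by positivity)

theorem tendsto_spectrumPoint (ha : 1 < a) :
    Tendsto (spectrumPoint a) atTop (𝓝 (1 / (1 + a))) := by
  have ha0 : a ≠ 0 := by positivity
  have hinv : Tendsto (fun n : ℕ => a⁻¹ ^ n) atTop (𝓝 0) :=
    tendsto_pow_atTop_nhds_zero_of_lt_one (by positivity) (inv_lt_one_of_one_lt₀ ha)
  have hratio : Tendsto (fun n : ℕ => a * (1 - a⁻¹ ^ n) / ((1 + a) * (a - a⁻¹ ^ n))) atTop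
      (𝓝 (a * (1 - 0) / ((1 + a) * (a - 0)))) :=
    ((hinv.const_sub 1).const_mul a).div ((hinv.const_sub a).const_mul (1 + a))
      (by rw [sub_zero]; positivity)
  rw [sub_zero, sub_zero, mul_comm a, mul_div_mul_right _ _ ha0] at hratio
  refine hratio.congr fun n => ?_
  rw [spectrumPoint, ← mul_div_mul_right _ _ (pow_ne_zero n ha0)]
  have hcancel : a⁻¹ ^ n * a ^ n = 1 := by rw [← mul_pow, inv_mul_cancel₀ ha0, one_pow]
  congr 1
  · linear_combination -a * hcancel
  · linear_combination -(1 + a) * hcancel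

theorem spectrumPoint_mem_Icc (ha : 1 < a) (n : ℕ) :
    spectrumPoint a n ∈ Set.Icc 0 (1 / (1 + a)) := by
  have hmono := (strictMono_spectrumPoint ha).monotone
  refine ⟨?_, hmono.ge_of_tendsto (tendsto_spectrumPoint ha) n⟩
  simpa [spectrumPoint] using hmono n.zero_le

theorem specL_inter_Icc {b : ℤ} (ha : 2 < a) (hab : a ^ 2 + 1 = b * a) :
    specL a ∩ Set.Icc 0 (1 / (1 + a)) = Set.range (spectrumPoint a) ∪ {1 / (1 + a)} := by
  apply Set.Subset.antisymm
  · rintro _ ⟨⟨ξ, rfl⟩, -, hle⟩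
    refine hle.lt_or_eq.imp (fun hlt => ?_) id
    obtain ⟨n, hn⟩ := exists_spectrumPoint_of_limsupDist_lt ha hab hlt
    exact ⟨n, hn.symm⟩
  · rintro _ (⟨n, rfl⟩ | rfl)
    · exact ⟨⟨_, limsupDist_periodicWord ha hab n⟩, spectrumPoint_mem_Icc (by linarith) n⟩
    · have hnonempty : {ξ | limsupDist a ξ = 1 / (1 + a)}.Nonempty := by
        refine Set.nonempty_iff_ne_empty.2 fun hempty => ?_
        exact not_countable_setOf_limsupDist_eq ha hab (hempty ▸ Set.countable_empty)
      exact ⟨hnonempty, by positivity, le_rfl⟩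

end SpectrumPoint

section Recurrence

theorem mul_pow_eq_of_recurrence {R : Type*} [CommRing R] {a b : R} (hab : a ^ 2 + 1 = b * a)
    {x : ℕ → R} (hx : ∀ n, x (n + 2) = b * x (n + 1) - x n) (n : ℕ) :
    x n * ((a ^ 2 - 1) * a ^ n) = (a * x 1 - x 0) * a ^ (2 * n) + a * (a * x 0 - x 1) := by
  induction n using Nat.twoStepInduction with
  | zero => ring
  | one => ring
  | more n ih ih' =>
    rw [hx]
    linear_combination a * b * ih' - a ^ 2 * ih
      - ((a * x 1 - x 0) * a ^ (2 * n + 2) + a * (a * x 0 - x 1)) * hab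

variable {a : ℝ} {b : ℤ} {p q : ℕ → ℤ}

theorem even_numerator_mul_pow (hab : a ^ 2 + 1 = b * a) (hp0 : p 0 = 0) (hp2 : p 2 = 1)
    (hpeven : ∀ n : ℕ, p (2 * n + 4) = b * p (2 * n + 2) - p (2 * n)) (n : ℕ) :
    p (2 * n) * ((a ^ 2 - 1) * a ^ n) = a * (a ^ (2 * n) - 1) := by
  have := mul_pow_eq_of_recurrence hab (x := fun n => (p (2 * n) : ℝ))
    (fun n => by exact_mod_cast hpeven n) n
  simp only [mul_zero, mul_one, hp0, hp2, Int.cast_zero, Int.cast_one] at this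
  linear_combination this

theorem even_denominator_mul_pow (hab : a ^ 2 + 1 = b * a) (hq0 : q 0 = 1) (hq2 : q 2 = 1 + b)
    (hqeven : ∀ n : ℕ, q (2 * n + 4) = b * q (2 * n + 2) - q (2 * n)) (n : ℕ) :
    q (2 * n) * ((a ^ 2 - 1) * a ^ n) = (1 + a) * (a ^ (2 * n + 1) - 1) := by
  have := mul_pow_eq_of_recurrence hab (x := fun n => (q (2 * n) : ℝ))
    (fun n => by exact_mod_cast hqeven n) n
  simp only [mul_zero, mul_one, hq0, hq2, Int.cast_add, Int.cast_one] at this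
  linear_combination this + (1 - a ^ (2 * n)) * hab

theorem div_eq_spectrumPoint (ha : 1 < a) (hab : a ^ 2 + 1 = b * a)
    (hp0 : p 0 = 0) (hp2 : p 2 = 1)
    (hpeven : ∀ n : ℕ, p (2 * n + 4) = b * p (2 * n + 2) - p (2 * n))
    (hpodd : ∀ n : ℕ, p (2 * n + 1) = p (2 * n) + p (2 * n + 2))
    (hq0 : q 0 = 1) (hq2 : q 2 = 1 + b)
    (hqeven : ∀ n : ℕ, q (2 * n + 4) = b * q (2 * n + 2) - q (2 * n))
    (hqodd : ∀ n : ℕ, q (2 * n + 1) = q (2 * n) + q (2 * n + 2)) (n : ℕ) :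
    (p n : ℝ) / q n = spectrumPoint a n := by
  have hp := even_numerator_mul_pow hab hp0 hp2 hpeven
  have hq := even_denominator_mul_pow hab hq0 hq2 hqeven
  have hscale (m : ℕ) : (a ^ 2 - 1) * a ^ m ≠ 0 :=
    (mul_pos (sub_pos.2 (one_lt_pow₀ ha two_ne_zero)) (by positivity)).ne'
  obtain ⟨m, rfl | rfl⟩ := n.even_or_odd'
  · rw [spectrumPoint, ← hp, ← hq, mul_div_mul_right _ _ (hscale m)]
  · rw [spectrumPoint, ← mul_div_mul_left (a * _) _ (by positivity : 1 + a ≠ 0),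
      ← mul_div_mul_right (p _ : ℝ) _ (hscale (m + 1)), hpodd, hqodd]
    have hp' := hp (m + 1)
    have hq' := hq (m + 1)
    rw [mul_add_one 2 m] at hp' hq'
    push_cast
    congr 1
    · linear_combination a * hp m + hp'
    · linear_combination a * hq m + hq'

theorem two_lt_and_sq_add_one_eq_of_eq_add_sqrt {b : ℝ} (hb : 3 ≤ b)
    (ha : a = (b + √(b ^ 2 - 4)) / 2) : 2 < a ∧ a ^ 2 + 1 = b * a := by
  have hsq := Real.sq_sqrt (by nlinarith : 0 ≤ b ^ 2 - 4)
  have hsqrt : 1 < √(b ^ 2 - 4) := Real.lt_sqrt_of_sq_lt (by nlinarith)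
  refine ⟨by linarith, ?_⟩
  rw [ha]
  linear_combination hsq / 4

end Recurrence

theorem stmt4_general (b : ℤ) (hb : 3 ≤ b) (α : ℝ)
    (hα : α = ((b : ℝ) + Real.sqrt ((b : ℝ) ^ 2 - 4)) / 2)
    (p q : ℕ → ℤ)
    (hp0 : p 0 = 0) (hp2 : p 2 = 1)
    (hpeven : ∀ n : ℕ, p (2 * n + 4) = b * p (2 * n + 2) - p (2 * n))
    (hpodd : ∀ n : ℕ, p (2 * n + 1) = p (2 * n) + p (2 * n + 2))
    (hq0 : q 0 = 1) (hq2 : q 2 = 1 + b)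
    (hqeven : ∀ n : ℕ, q (2 * n + 4) = b * q (2 * n + 2) - q (2 * n))
    (hqodd : ∀ n : ℕ, q (2 * n + 1) = q (2 * n) + q (2 * n + 2)) :
    StrictMono (fun n : ℕ => (p n : ℝ) / (q n : ℝ)) ∧
    Filter.Tendsto (fun n : ℕ => (p n : ℝ) / (q n : ℝ)) Filter.atTop
      (nhds (1 / (1 + α))) ∧
    (specL α ∩ Set.Icc 0 (1 / (1 + α)) =
      {x : ℝ | ∃ n : ℕ, x = (p n : ℝ) / (q n : ℝ)} ∪ {1 / (1 + α)}) ∧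
    ¬ Set.Countable {ξ : ℝ | limsupDist α ξ = 1 / (1 + α)} := by
  obtain ⟨h2, hquad⟩ := two_lt_and_sq_add_one_eq_of_eq_add_sqrt (by exact_mod_cast hb) hα
  have h1 : 1 < α := by linarith
  have hpq := div_eq_spectrumPoint h1 hquad hp0 hp2 hpeven hpodd hq0 hq2 hqeven hqodd
  simp only [hpq, eq_comm (b := spectrumPoint α _)]
  exact ⟨strictMono_spectrumPoint h1, tendsto_spectrumPoint h1, specL_inter_Icc h2 hquad,
    not_countable_setOf_limsupDist_eq h2 hquad⟩

theorem stmt4 (b : ℤ) (hb : 4 ≤ b) (α : ℝ)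
    (hα : α = ((b : ℝ) + Real.sqrt ((b : ℝ) ^ 2 - 4)) / 2)
    (p q : ℕ → ℤ)
    (hp0 : p 0 = 0) (hp2 : p 2 = 1)
    (hpeven : ∀ n : ℕ, p (2 * n + 4) = b * p (2 * n + 2) - p (2 * n))
    (hpodd : ∀ n : ℕ, p (2 * n + 1) = p (2 * n) + p (2 * n + 2))
    (hq0 : q 0 = 1) (hq2 : q 2 = 1 + b)
    (hqeven : ∀ n : ℕ, q (2 * n + 4) = b * q (2 * n + 2) - q (2 * n))
    (hqodd : ∀ n : ℕ, q (2 * n + 1) = q (2 * n) + q (2 * n + 2)) :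
    StrictMono (fun n : ℕ => (p n : ℝ) / (q n : ℝ)) ∧
    Filter.Tendsto (fun n : ℕ => (p n : ℝ) / (q n : ℝ)) Filter.atTop
      (nhds (1 / (1 + α))) ∧
    (specL α ∩ Set.Icc 0 (1 / (1 + α)) =
      {x : ℝ | ∃ n : ℕ, x = (p n : ℝ) / (q n : ℝ)} ∪ {1 / (1 + α)}) ∧
    ¬ Set.Countable {ξ : ℝ | limsupDist α ξ = 1 / (1 + α)} :=
  stmt4_general b (by omega) α hα p q hp0 hp2 hpeven hpodd hq0 hq2 hqeven hqodd
end
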